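/- Let n ≥ 2, let 1 ≤ k ≤ n−1, and let f₁, f₂ ∈ Q₀ⁿ. Assume the Shephard condition: ‖P_H f₁‖_{L¹(H)} ≤ ‖P_H f₂‖_{L¹(H)} for every k-dimensional linear subspace H ⊆ ℝⁿ. Then ‖f₁‖₁^{k/n} · ‖f₁‖_∞^{(n−k)/n} ≤ (16·e·√n)^{n−k} · ‖f₂‖₁^{k/n} · ‖f₂‖_∞^{(n−k)/n}. -/

import Mathlib

open MeasureTheory

noncomputable section

/-- `ℝⁿ` with its Euclidean structure. -/
abbrev Eucl (n : ℕ) := EuclideanSpace ℝ (Fin n)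

/-- `f : ℝⁿ → [0,∞)` is log-concave:
`f(tx+(1−t)y) ≥ f(x)^t · f(y)^(1−t)` for all `x, y` and `t ∈ (0,1)`. -/
def IsLogConcave {n : ℕ} (f : Eucl n → ℝ) : Prop :=
  ∀ x y : Eucl n, ∀ t : ℝ, 0 < t → t < 1 →
    f x ^ t * f y ^ (1 - t) ≤ f (t • x + (1 - t) • y)

/-- The class `Q₀ⁿ`: nonnegative, log-concave, upper semicontinuous, integrable
functions with positive integral. -/
def MemQ0 {n : ℕ} (f : Eucl n → ℝ) : Prop :=
  (∀ x, 0 ≤ f x) ∧ IsLogConcave f ∧ UpperSemicontinuous f ∧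
    Integrable f ∧ 0 < ∫ x, f x

/-- `‖f‖_∞ = sup f`. -/
def supNorm {n : ℕ} (f : Eucl n → ℝ) : ℝ := ⨆ x, f x

/-- `‖f‖_p = (∫ f^p)^(1/p)`. -/
def lpNorm {n : ℕ} (p : ℝ) (f : Eucl n → ℝ) : ℝ := (∫ x, f x ^ p) ^ (1 / p)

/-- `‖P_H f‖_{L¹(H)} = ∫_H sup_{z ∈ H⊥} f(y+z) dλ_H(y)`, the `L¹(H)`-norm of the
projection of `f` onto the subspace `H` (with the Lebesgue measure on `H` induced
by the Euclidean structure). -/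
def projL1 {n : ℕ} (f : Eucl n → ℝ) (H : Submodule ℝ (Eucl n)) : ℝ :=
  ∫ y : H, ⨆ z : Hᗮ, f ((y : Eucl n) + (z : Eucl n))

/-- `‖S_H f‖_{L¹(H)} = ∫_H f dλ_H`, the integral of the section `f|_H`. -/
def sectL1 {n : ℕ} (f : Eucl n → ℝ) (H : Submodule ℝ (Eucl n)) : ℝ :=
  ∫ y : H, f (y : Eucl n)

section part1

set_option linter.unusedSectionVars false
set_option linter.unusedVariables false

open scoped ENNReal

lemma lintegral_smul_scale {E : Type*} [NormedAddCommGroup E] [NormedSpace ℝ E] [MeasurableSpace E]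
    [BorelSpace E] [FiniteDimensional ℝ E] (μ : Measure E) [μ.IsAddHaarMeasure] (r : ℝ) (hr : 0 < r)
    (G : E → ℝ≥0∞) :
    ∫⁻ y, G (r⁻¹ • y) ∂μ = ENNReal.ofReal (r ^ Module.finrank ℝ E) * ∫⁻ y, G y ∂μ := by
  have := Measure.map_addHaar_smul μ (r := r⁻¹) (by positivity)
  have e2 : ∫⁻ y, G (r⁻¹ • y) ∂μ = ∫⁻ y, G y ∂(Measure.map (r⁻¹ • ·) μ) := by
    have he : MeasurableEmbedding (fun x : E => r⁻¹ • x) :=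
      (Homeomorph.smulOfNeZero r⁻¹ (by positivity)).measurableEmbedding
    rw [he.lintegral_map]
  rw [e2, this, lintegral_smul_measure, smul_eq_mul, inv_pow, inv_inv, abs_of_pos (by positivity)]

lemma oneD_ineq (g : ℝ → ℝ≥0∞) (c : ℝ) (hc : 0 ≤ c) :
    (∫⁻ x, g x) + ENNReal.ofReal (2 * c) * (⨆ p, g p) ≤
      ∫⁻ x, ⨆ t : Set.Icc (-c) c, g (x + t) := by
  rw [ENNReal.mul_iSup, ENNReal.add_iSup]
  refine iSup_le fun p => ?_
  set A : ℝ → ℝ≥0∞ := fun x => ⨆ t : Set.Icc (-c) c, g (x + t) with hA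
  have hle : ∀ x t, -c ≤ t → t ≤ c → g (x + t) ≤ A x := fun x t h1 h2 =>
    le_iSup (fun t : Set.Icc (-c) c => g (x + t)) ⟨t, h1, h2⟩
  have e1 : ∫⁻ x in Set.Iio (p - c), A x ≥ ∫⁻ x in Set.Iio p, g x := by
    have : ∫⁻ x in Set.Iio p, g x = ∫⁻ x in Set.Iio (p - c), g (x + c) := by
      rw [← lintegral_indicator measurableSet_Iio, ← lintegral_indicator measurableSet_Iio,
        ← lintegral_add_right_eq_self _ c]
      congr 1; ext x
      simp only [Set.indicator, Set.mem_Iio, lt_sub_iff_add_lt]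
    rw [this]
    exact lintegral_mono fun x => hle x c (by linarith) le_rfl
  have e2 : ∫⁻ x in Set.Ici (p + c), A x ≥ ∫⁻ x in Set.Ici p, g x := by
    have : ∫⁻ x in Set.Ici p, g x = ∫⁻ x in Set.Ici (p + c), g (x + (-c)) := by
      rw [← lintegral_indicator measurableSet_Ici, ← lintegral_indicator measurableSet_Ici,
        ← lintegral_add_right_eq_self _ (-c)]
      congr 1; ext x
      simp only [Set.indicator, Set.mem_Ici, ← sub_eq_add_neg, le_sub_iff_add_le]
    rw [this]
    exact lintegral_mono fun x => hle x (-c) le_rfl (by linarith)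
  have e3 : ∫⁻ x in Set.Ico (p - c) (p + c), A x ≥ ENNReal.ofReal (2 * c) * g p := by
    calc ENNReal.ofReal (2 * c) * g p = ∫⁻ x in Set.Ico (p - c) (p + c), g p := by
          rw [setLIntegral_const, Real.volume_Ico, mul_comm]; congr 2; ring
      _ ≤ _ := by
          refine setLIntegral_mono' measurableSet_Ico fun x hx => ?_
          have := hle x (p - x) (by linarith [hx.2]) (by linarith [hx.1])
          simpa using this
  have s1 : (∫⁻ x, g x) = (∫⁻ x in Set.Iio p, g x) + ∫⁻ x in Set.Ici p, g x := by
    rw [← lintegral_add_compl g (measurableSet_Iio (a := p)), Set.compl_Iio]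
  have s2 : (∫⁻ x, A x) = (∫⁻ x in Set.Iio (p - c), A x) +
      ((∫⁻ x in Set.Ico (p - c) (p + c), A x) + ∫⁻ x in Set.Ici (p + c), A x) := by
    rw [← lintegral_add_compl A (measurableSet_Iio (a := p - c)), Set.compl_Iio,
      ← Set.Ico_union_Ici_eq_Ici (show p - c ≤ p + c by linarith),
      lintegral_union measurableSet_Ici]
    rw [Set.disjoint_left]; intro x hx hx'
    exact absurd hx.2 (not_lt.2 hx')
  rw [s1, s2]
  calc _ = (∫⁻ x in Set.Iio p, g x) + (ENNReal.ofReal (2 * c) * g p + ∫⁻ x in Set.Ici p, g x) := by ring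
    _ ≤ _ := by gcongr

variable {ι : Type*} [Fintype ι] [DecidableEq ι]

/-- sup over coordinate i -/
def supC (i : ι) (g : (ι → ℝ) → ℝ≥0∞) (x : ι → ℝ) : ℝ≥0∞ := ⨆ t : ℝ, g (Function.update x i t)

/-- sup over segment in coordinate i -/
def supSeg (i : ι) (c : ℝ) (g : (ι → ℝ) → ℝ≥0∞) (x : ι → ℝ) : ℝ≥0∞ :=
  ⨆ t : Set.Icc (-c) c, g (Function.update x i (x i + t))

/-- sup over coordinates off S -/
def supOff (S : Finset ι) (g : (ι → ℝ) → ℝ≥0∞) (x : ι → ℝ) : ℝ≥0∞ :=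
  ⨆ z : ι → ℝ, g (fun i => if i ∈ S then x i else z i)

/-- sup over box -/
def supBox (T : Finset ι) (c : ι → ℝ) (g : (ι → ℝ) → ℝ≥0∞) (x : ι → ℝ) : ℝ≥0∞ :=
  ⨆ q : {q : ι → ℝ // ∀ i, (i ∈ T → |q i| ≤ c i) ∧ (i ∉ T → q i = 0)}, g (x + q)

lemma lsc_comp {X Y : Type*} [TopologicalSpace X] [TopologicalSpace Y] {g : Y → ℝ≥0∞}
    (hg : LowerSemicontinuous g) {h : X → Y} (hh : Continuous h) :
    LowerSemicontinuous (fun x => g (h x)) := fun x => (hg (h x)).comp hh.continuousAt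

lemma supSeg_lsc (i : ι) (c : ℝ) {g : (ι → ℝ) → ℝ≥0∞} (hg : LowerSemicontinuous g) :
    LowerSemicontinuous (supSeg i c g) :=
  lowerSemicontinuous_iSup fun t => lsc_comp hg (by fun_prop)

lemma supC_lsc (i : ι) {g : (ι → ℝ) → ℝ≥0∞} (hg : LowerSemicontinuous g) :
    LowerSemicontinuous (supC i g) :=
  lowerSemicontinuous_iSup fun t => lsc_comp hg (by fun_prop)

lemma supOff_lsc (S : Finset ι) {g : (ι → ℝ) → ℝ≥0∞} (hg : LowerSemicontinuous g) :
    LowerSemicontinuous (supOff S g) := by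
  refine lowerSemicontinuous_iSup fun t => lsc_comp hg ?_
  refine continuous_pi fun i => ?_
  split_ifs <;> fun_prop

lemma supBox_lsc (S : Finset ι) (c : ι → ℝ) {g : (ι → ℝ) → ℝ≥0∞} (hg : LowerSemicontinuous g) :
    LowerSemicontinuous (supBox S c g) := 
  lowerSemicontinuous_iSup fun t => lsc_comp hg (by fun_prop)

lemma supSeg_supBox_le (i : ι) (T : Finset ι) (hi : i ∉ T) (c : ι → ℝ)
    (g : (ι → ℝ) → ℝ≥0∞) (x : ι → ℝ) :
    supSeg i (c i) (supBox T c g) x ≤ supBox (insert i T) c g x := by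
  refine iSup_le fun t => iSup_le fun q => ?_
  have key : Function.update x i (x i + t) + q.1 = x + Function.update q.1 i (t : ℝ) := by
    ext j
    by_cases h : j = i
    · subst h; simp [(q.2 j).2 hi]
    · simp [h]
  rw [key]
  refine le_iSup (fun q : {q : ι → ℝ // ∀ j, (j ∈ insert i T → |q j| ≤ c j) ∧ (j ∉ insert i T → q j = 0)} => g (x + q)) ⟨Function.update q.1 i t, fun j => ?_⟩
  by_cases h : j = i
  · subst h; simp [abs_le]; exact t.2
  · simp only [Finset.mem_insert, h, false_or, ne_eq, not_false_eq_true, Function.update_of_ne]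
    exact q.2 j

lemma supC_mono (i : ι) {g h : (ι → ℝ) → ℝ≥0∞} (hgh : ∀ x, g x ≤ h x) (x : ι → ℝ) :
    supC i g x ≤ supC i h x := iSup_mono fun t => hgh _

lemma le_supBox (T : Finset ι) (c : ι → ℝ) (hc : ∀ i, 0 ≤ c i) (g : (ι → ℝ) → ℝ≥0∞) (x : ι → ℝ) :
    g x ≤ supBox T c g x := by
  have := le_iSup (fun q : {q : ι → ℝ // ∀ i, (i ∈ T → |q i| ≤ c i) ∧ (i ∉ T → q i = 0)} => g (x + q)) ⟨0, fun i => by simp [hc i]⟩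
  simp only [add_zero] at this
  exact this

/-- One coordinate inequality. -/
lemma supSeg_lmarginal (S : Finset ι) (i : ι) (hi : i ∈ S) (c : ℝ) (hc : 0 ≤ c)
    {g : (ι → ℝ) → ℝ≥0∞} (hg : LowerSemicontinuous g) (x : ι → ℝ) :
    lmarginal (fun _ => volume) S g x
      + ENNReal.ofReal (2 * c) * lmarginal (fun _ => volume) (S.erase i) (supC i g) x ≤
    lmarginal (fun _ => volume) S (supSeg i c g) x := by
  have hm := hg.measurable
  have hm1 := (supSeg_lsc i c hg).measurable
  have hm2 := (supC_lsc i hg).measurable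
  rw [lmarginal_erase' _ hm hi, lmarginal_erase' _ hm1 hi]
  unfold lmarginal
  rw [← lintegral_const_mul' _ _ ENNReal.ofReal_ne_top]
  refine (le_lintegral_add _ _).trans (lintegral_mono fun y => ?_)
  have := oneD_ineq (fun t => g (Function.update (Function.updateFinset x (S.erase i) y) i t)) c hc
  simpa [supSeg, supC] using this

lemma telescoping (S T : Finset ι) (hT : T ⊆ S) (c : ι → ℝ) (hc : ∀ i, 0 ≤ c i)
    {g : (ι → ℝ) → ℝ≥0∞} (hg : LowerSemicontinuous g) (x : ι → ℝ) :
    lmarginal (fun _ => volume) S g x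
      + ∑ i ∈ T, ENNReal.ofReal (2 * c i) * lmarginal (fun _ => volume) (S.erase i) (supC i g) x ≤
    lmarginal (fun _ => volume) S (supBox T c g) x := by
  induction T using Finset.induction_on with
  | empty =>
    simp only [Finset.sum_empty, add_zero]
    exact lmarginal_mono (fun y => le_supBox _ c hc g y) x
  | insert i T hi ih =>
    rw [Finset.sum_insert hi]
    have ih := ih ((Finset.subset_insert _ _).trans hT)
    have hiS : i ∈ S := hT (Finset.mem_insert_self _ _)
    have h1 := supSeg_lmarginal S i hiS (c i) (hc i) (supBox_lsc T c hg) x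
    have h2 : lmarginal (fun _ => volume) S (supSeg i (c i) (supBox T c g)) x ≤
      lmarginal (fun _ => volume) S (supBox (insert i T) c g) x :=
      lmarginal_mono (fun y => supSeg_supBox_le i T hi c g y) x
    have h3 : lmarginal (fun _ => volume) (S.erase i) (supC i g) x ≤
       lmarginal (fun _ => volume) (S.erase i) (supC i (supBox T c g)) x :=
      lmarginal_mono (fun y => supC_mono i (le_supBox T c hc g) y) x
    refine le_trans ?_ (h1.trans h2)
    calc _ = (lmarginal (fun _ => volume) S g x
      + ∑ i ∈ T, ENNReal.ofReal (2 * c i) * lmarginal (fun _ => volume) (S.erase i) (supC i g) x)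
        + ENNReal.ofReal (2 * c i) * lmarginal (fun _ => volume) (S.erase i) (supC i g) x := by ring
      _ ≤ _ := by gcongr

/-- Scaling property. -/
def ScaleProp (c a : ι → ℝ) (lam : ℝ) (g : (ι → ℝ) → ℝ≥0∞) : Prop :=
  ∀ t : ℝ, 0 < t → ∀ q : ι → ℝ, (∀ i, |q i| ≤ t * a i) → ∀ x,
    g (x + q) ≤ ENNReal.ofReal (Real.exp (lam * t)) * g ((1 + t)⁻¹ • (x + t • c))

lemma ScaleProp.supOff {c a : ι → ℝ} {lam : ℝ} {g : (ι → ℝ) → ℝ≥0∞} (ha : ∀ i, 0 ≤ a i)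
    (h : ScaleProp c a lam g)
    (S : Finset ι) : ScaleProp c a lam (supOff S g) := by
  intro t ht q hq x
  refine iSup_le fun z => ?_
  set q' : ι → ℝ := fun i => if i ∈ S then q i else 0
  have e : (fun i => if i ∈ S then (x + q) i else z i) = (fun i => if i ∈ S then x i else z i) + q' := by
    ext i; simp only [q', Pi.add_apply]; split_ifs <;> simp
  rw [e]
  refine (h t ht q' (fun i => ?_) _).trans ?_
  · simp only [q']; split_ifs
    · exact hq i
    · simpa using mul_nonneg ht.le (ha i)
  · gcongr
    refine le_trans (le_of_eq ?_) (le_iSup _ ((1 + t)⁻¹ • (z + t • c)))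
    congr 1; ext i; simp only [Pi.smul_apply, Pi.add_apply]; split_ifs <;> simp

lemma supC_supOff (S : Finset ι) (i : ι) (hi : i ∈ S) (g : (ι → ℝ) → ℝ≥0∞) :
    supC i (supOff S g) = supOff (S.erase i) g := by
  ext x
  apply le_antisymm
  · refine iSup_le fun t => iSup_le fun z => ?_
    refine le_trans (le_of_eq ?_) (le_iSup _ (Function.update z i t))
    congr 1; ext j
    by_cases h : j = i
    · subst h; simp [hi]
    · simp [h]
  · refine iSup_le fun z => ?_
    refine le_trans ?_ (le_iSup (fun t => supOff S g (Function.update x i t)) (z i))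
    refine le_trans (le_of_eq ?_) (le_iSup _ z)
    congr 1; ext j
    by_cases h : j = i
    · subst h; simp [hi]
    · simp [h]

lemma lmarginal_scale (S : Finset ι) (g : (ι → ℝ) → ℝ≥0∞) (c : ι → ℝ) (t : ℝ) (ht : 0 < t) :
    lmarginal (fun _ => volume) S (fun x => g ((1 + t)⁻¹ • (x + t • c))) c =
      ENNReal.ofReal ((1 + t) ^ S.card) * lmarginal (fun _ => volume) S g c := by
  unfold lmarginal
  have h1t : (1 + t) ≠ 0 := by positivity
  set G : (S → ℝ) → ℝ≥0∞ := fun y => g (Function.updateFinset c S y)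
  have e : ∀ y : S → ℝ, g ((1 + t)⁻¹ • (Function.updateFinset c S y + t • c)) =
      G ((1 + t)⁻¹ • (y + fun i : S => t * c i)) := by
    intro y
    simp only [G]
    congr 1; ext i
    simp only [Function.updateFinset, Pi.smul_apply, Pi.add_apply]
    split_ifs
    · simp
    · simp; field_simp
  simp_rw [e]
  change ∫⁻ y : S → ℝ, G ((1 + t)⁻¹ • (y + fun i : S => t * c i)) = _ * ∫⁻ y : S → ℝ, G y
  rw [lintegral_add_right_eq_self (fun y => G ((1 + t)⁻¹ • y))]
  rw [lintegral_smul_scale _ _ (by positivity)]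
  simp

lemma step_pre (S : Finset ι) (c a : ι → ℝ) (lam : ℝ) (ha : ∀ i, 0 ≤ a i)
    {g : (ι → ℝ) → ℝ≥0∞} (hg : LowerSemicontinuous g) (h : ScaleProp c a lam g) (t : ℝ) (ht : 0 < t) :
    lmarginal (fun _ => volume) S (supOff S g) c
      + ENNReal.ofReal t * ∑ i ∈ S, ENNReal.ofReal (2 * a i) *
        lmarginal (fun _ => volume) (S.erase i) (supOff (S.erase i) g) c ≤
    ENNReal.ofReal (Real.exp (lam * t) * (1 + t) ^ S.card) * lmarginal (fun _ => volume) S (supOff S g) c := by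
  have h1 := telescoping S S le_rfl (fun i => t * a i) (fun i => mul_nonneg ht.le (ha i)) (supOff_lsc S hg) c
  have h2 : lmarginal (fun _ => volume) S (supBox S (fun i => t * a i) (supOff S g)) c ≤
      lmarginal (fun _ => volume) S (fun x => ENNReal.ofReal (Real.exp (lam * t)) * (supOff S g) ((1 + t)⁻¹ • (x + t • c))) c := by
    refine lmarginal_mono (fun x => ?_) c
    refine iSup_le fun q => ?_
    refine h.supOff ha S t ht q.1 (fun i => ?_) x
    by_cases hi : i ∈ S
    · exact (q.2 i).1 hi
    · rw [(q.2 i).2 hi]; simpa using mul_nonneg ht.le (ha i)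
  have h3 : lmarginal (fun _ => volume) S (fun x => ENNReal.ofReal (Real.exp (lam * t)) * (supOff S g) ((1 + t)⁻¹ • (x + t • c))) c
     = ENNReal.ofReal (Real.exp (lam * t)) * lmarginal (fun _ => volume) S (fun x => (supOff S g) ((1 + t)⁻¹ • (x + t • c))) c := by
    unfold lmarginal
    rw [lintegral_const_mul' _ _ ENNReal.ofReal_ne_top]
  rw [h3, lmarginal_scale S _ c t ht, ← mul_assoc, ← ENNReal.ofReal_mul (by positivity)] at h2
  refine le_trans (le_of_eq ?_) (h1.trans h2)
  congr 1
  rw [Finset.mul_sum]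
  refine Finset.sum_congr rfl fun i hi => ?_
  rw [supC_supOff S i hi, ← mul_assoc, ← ENNReal.ofReal_mul ht.le]
  congr 2; ring

lemma limit_aux (X Y : ℝ) (hY : 0 ≤ Y) (lam : ℝ) (d : ℕ)
    (h : ∀ t : ℝ, 0 < t → Y + t * X ≤ Real.exp (lam * t) * (1 + t) ^ d * Y) :
    X ≤ (d + lam) * Y := by
  have hd : HasDerivAt (fun t : ℝ => Real.exp (lam * t) * (1 + t) ^ d * Y) ((d + lam) * Y) 0 := by
    have h1 : HasDerivAt (fun t : ℝ => Real.exp (lam * t)) (lam) 0 := by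
      have := ((hasDerivAt_id (0:ℝ)).const_mul lam).exp
      simpa using this
    have h2 : HasDerivAt (fun t : ℝ => (1 + t) ^ d) (d : ℝ) 0 := by
      have := ((hasDerivAt_id (0:ℝ)).const_add 1).pow d
      simp at this
      exact this
    have := (h1.mul h2).mul_const Y
    have e : (d + lam) * Y = (lam * (1 + 0) ^ d + Real.exp (lam * 0) * ↑d) * Y := by
      norm_num [add_comm]
    rw [e]; exact this
  have hs := hd.tendsto_slope_zero_right
  refine ge_of_tendsto hs ?_
  filter_upwards [self_mem_nhdsWithin] with t ht
  have ht' : (0:ℝ) < t := ht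
  have := h t ht'
  simp only [zero_add, smul_eq_mul, mul_zero, Real.exp_zero, add_zero, one_pow, one_mul]
  rw [le_inv_mul_iff₀ ht']
  linarith

lemma step (S : Finset ι) (hS : S.Nonempty) (c a : ι → ℝ) (lam : ℝ) (hlam : 0 ≤ lam) (ha : ∀ i, 0 ≤ a i)
    {g : (ι → ℝ) → ℝ≥0∞} (hg : LowerSemicontinuous g) (h : ScaleProp c a lam g) :
    ∑ i ∈ S, ENNReal.ofReal (2 * a i) *
        lmarginal (fun _ => volume) (S.erase i) (supOff (S.erase i) g) c ≤
    ENNReal.ofReal (S.card + lam) * lmarginal (fun _ => volume) S (supOff S g) c := by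
  have hpos : (0:ℝ) < S.card := by exact_mod_cast hS.card_pos
  set Y := lmarginal (fun _ => volume) S (supOff S g) c with hY
  set X := ∑ i ∈ S, ENNReal.ofReal (2 * a i) *
        lmarginal (fun _ => volume) (S.erase i) (supOff (S.erase i) g) c with hX
  by_cases hYt : Y = ⊤
  · rw [hYt, ENNReal.mul_top]
    · exact le_top
    · simp; linarith
  have hpre := step_pre S c a lam ha hg h
  have hXt : X ≠ ⊤ := by
    intro hXt
    have := hpre 1 one_pos
    rw [← hX, ← hY, hXt] at this
    simp at this
    exact ENNReal.mul_ne_top ENNReal.ofReal_ne_top hYt this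
  have key : X.toReal ≤ (S.card + lam) * Y.toReal := by
    apply limit_aux _ _ ENNReal.toReal_nonneg
    intro t ht
    have := ENNReal.toReal_mono (by finiteness) (hpre t ht)
    rw [← hX, ← hY, ENNReal.toReal_add hYt (by finiteness), ENNReal.toReal_mul, ENNReal.toReal_mul,
      ENNReal.toReal_ofReal ht.le, ENNReal.toReal_ofReal (by positivity)] at this
    exact this
  rw [← ENNReal.ofReal_toReal hXt, ← ENNReal.ofReal_toReal hYt, ← ENNReal.ofReal_mul (by positivity)]
  exact ENNReal.ofReal_le_ofReal key

end part1

section part2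

open scoped ENNReal
set_option linter.unusedSectionVars false
set_option linter.unusedVariables false

variable {ι : Type*} [Fintype ι] [DecidableEq ι]

/-- integral of the projection -/
def JJ (S : Finset ι) (g : (ι → ℝ) → ℝ≥0∞) (c : ι → ℝ) : ℝ≥0∞ :=
  lmarginal (fun _ => volume) S (supOff S g) c

/-- weighted sum of projections -/
def VV (d : ℕ) (a : ι → ℝ) (g : (ι → ℝ) → ℝ≥0∞) (c : ι → ℝ) : ℝ≥0∞ :=
  ∑ S ∈ Finset.powersetCard d (Finset.univ : Finset ι),
    (∏ i ∈ Sᶜ, ENNReal.ofReal (2 * a i)) * JJ S g c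

lemma VV_double (d m : ℕ) (hdm : d + m + 1 = Fintype.card ι) (a : ι → ℝ) (J : Finset ι → ℝ≥0∞) :
    ((m + 1 : ℕ) : ℝ≥0∞) * ∑ S ∈ Finset.powersetCard d (Finset.univ : Finset ι),
      (∏ i ∈ Sᶜ, ENNReal.ofReal (2 * a i)) * J S =
    ∑ S ∈ Finset.powersetCard (d + 1) (Finset.univ : Finset ι),
      (∏ i ∈ Sᶜ, ENNReal.ofReal (2 * a i)) * ∑ i ∈ S, ENNReal.ofReal (2 * a i) * J (S.erase i) := by
  have e1 : ((m + 1 : ℕ) : ℝ≥0∞) * ∑ S ∈ Finset.powersetCard d (Finset.univ : Finset ι),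
      (∏ i ∈ Sᶜ, ENNReal.ofReal (2 * a i)) * J S =
      ∑ S ∈ Finset.powersetCard d (Finset.univ : Finset ι), ∑ i ∈ Sᶜ,
      (∏ i ∈ Sᶜ, ENNReal.ofReal (2 * a i)) * J S := by
    rw [Finset.mul_sum]
    refine Finset.sum_congr rfl fun S hS => ?_
    rw [Finset.sum_const, nsmul_eq_mul, Finset.card_compl, (Finset.mem_powersetCard.1 hS).2]
    congr 3; omega
  rw [e1]
  simp_rw [Finset.mul_sum]
  rw [Finset.sum_sigma', Finset.sum_sigma']
  refine Finset.sum_bij' (fun p _ => ⟨insert p.2 p.1, p.2⟩) (fun p _ => ⟨p.1.erase p.2, p.2⟩) ?_ ?_ ?_ ?_ ?_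
  · rintro ⟨S, i⟩ h
    simp only [Finset.mem_sigma, Finset.mem_powersetCard, Finset.mem_compl] at h ⊢
    refine ⟨⟨Finset.subset_univ _, ?_⟩, Finset.mem_insert_self _ _⟩
    rw [Finset.card_insert_of_notMem h.2, h.1.2]
  · rintro ⟨S, i⟩ h
    simp only [Finset.mem_sigma, Finset.mem_powersetCard, Finset.mem_compl] at h ⊢
    refine ⟨⟨Finset.subset_univ _, ?_⟩, by simp⟩
    rw [Finset.card_erase_of_mem h.2, h.1.2]; simp
  · rintro ⟨S, i⟩ h
    simp only [Finset.mem_sigma, Finset.mem_powersetCard, Finset.mem_compl] at h ⊢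
    simp [Finset.erase_insert h.2]
  · rintro ⟨S, i⟩ h
    simp only [Finset.mem_sigma, Finset.mem_powersetCard, Finset.mem_compl] at h ⊢
    simp [Finset.insert_erase h.2]
  · rintro ⟨S, i⟩ h
    simp only [Finset.mem_sigma, Finset.mem_powersetCard, Finset.mem_compl] at h ⊢
    rw [Finset.erase_insert h.2, Finset.compl_insert, ← mul_assoc, Finset.prod_erase_mul]
    simpa using h.2

lemma VV_step (d m : ℕ) (hdm : d + m + 1 = Fintype.card ι) (c a : ι → ℝ) (lam : ℝ) (hlam : 0 ≤ lam)
    (ha : ∀ i, 0 ≤ a i)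
    {g : (ι → ℝ) → ℝ≥0∞} (hg : LowerSemicontinuous g) (h : ScaleProp c a lam g) :
    ((m + 1 : ℕ) : ℝ≥0∞) * VV d a g c ≤ ENNReal.ofReal (Fintype.card ι + lam) * VV (d + 1) a g c := by
  unfold VV
  rw [VV_double d m hdm, Finset.mul_sum]
  refine Finset.sum_le_sum fun S hS => ?_
  have hc := (Finset.mem_powersetCard.1 hS).2
  have := step S (Finset.card_pos.1 (by omega)) c a lam hlam ha hg h
  rw [mul_left_comm]
  gcongr
  refine this.trans ?_
  unfold JJ
  gcongr
  exact Finset.card_le_univ S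

lemma VV_bound (d m : ℕ) (hdm : d + m = Fintype.card ι) (c a : ι → ℝ) (lam : ℝ) (hlam : 0 ≤ lam)
    (ha : ∀ i, 0 ≤ a i)
    {g : (ι → ℝ) → ℝ≥0∞} (hg : LowerSemicontinuous g) (h : ScaleProp c a lam g) :
    (m.factorial : ℝ≥0∞) * VV d a g c ≤ ENNReal.ofReal (Fintype.card ι + lam) ^ m * ∫⁻ x, g x := by
  induction m generalizing d with
  | zero =>
    have : d = (Finset.univ : Finset ι).card := by simpa using hdm
    unfold VV
    rw [this, Finset.powersetCard_self]
    simp [JJ, lmarginal_univ, supOff]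
    rfl
  | succ m ih =>
    have h1 := VV_step d m (by omega) c a lam hlam ha hg h
    have h2 := ih (d + 1) (by omega)
    rw [Nat.factorial_succ, Nat.cast_mul, mul_comm ((m + 1 : ℕ) : ℝ≥0∞), mul_assoc]
    calc _ ≤ (m.factorial : ℝ≥0∞) * (ENNReal.ofReal (Fintype.card ι + lam) * VV (d + 1) a g c) := by gcongr
      _ = ENNReal.ofReal (Fintype.card ι + lam) * ((m.factorial : ℝ≥0∞) * VV (d + 1) a g c) := by ring
      _ ≤ ENNReal.ofReal (Fintype.card ι + lam) * (ENNReal.ofReal (Fintype.card ι + lam) ^ m * ∫⁻ x, g x) := by gcongr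
      _ = _ := by ring

/-- Open box regularization -/
def reg (σ : ℝ) (a : ι → ℝ) (g : (ι → ℝ) → ℝ≥0∞) (x : ι → ℝ) : ℝ≥0∞ :=
  ⨆ u : {u : ι → ℝ // ∀ i, |u i| < σ * a i}, g (x + u)

lemma reg_lsc (σ : ℝ) (a : ι → ℝ) (g : (ι → ℝ) → ℝ≥0∞) : LowerSemicontinuous (reg σ a g) := by
  rw [lowerSemicontinuous_iff_isOpen_preimage]
  intro y
  have : reg σ a g ⁻¹' Set.Ioi y =
      ⋃ z ∈ {z | y < g z}, {x : ι → ℝ | ∀ i, |z i - x i| < σ * a i} := by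
    ext x
    simp only [reg, Set.mem_preimage, Set.mem_Ioi, lt_iSup_iff, Set.mem_iUnion, Set.mem_setOf_eq]
    constructor
    · rintro ⟨u, hu⟩
      exact ⟨x + u, hu, fun i => by simpa using u.2 i⟩
    · rintro ⟨z, hz, hx⟩
      exact ⟨⟨z - x, hx⟩, by simpa using hz⟩
  rw [this]
  refine isOpen_biUnion fun z _ => ?_
  simp only [Set.setOf_forall]
  refine isOpen_iInter_of_finite fun i => ?_
  exact isOpen_lt (by fun_prop) (by fun_prop)

lemma le_reg (σ : ℝ) (hσ : 0 < σ) (a : ι → ℝ) (ha : ∀ i, 0 < a i) (g : (ι → ℝ) → ℝ≥0∞) (x : ι → ℝ) :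
    g x ≤ reg σ a g x := by
  have := le_iSup (fun u : {u : ι → ℝ // ∀ i, |u i| < σ * a i} => g (x + u))
    ⟨0, fun i => by simpa using mul_pos hσ (ha i)⟩
  simp only [add_zero] at this
  exact this

lemma ScaleProp.reg {c a : ι → ℝ} {lam : ℝ} {g : (ι → ℝ) → ℝ≥0∞}
    (h : ScaleProp c a lam g) (σ : ℝ) : ScaleProp c a lam (reg σ a g) := by
  intro t ht q hq x
  refine iSup_le fun u => ?_
  have := h t ht q hq (x + u)
  rw [add_right_comm] at this
  refine this.trans ?_
  gcongr
  have h1 : 0 < 1 + t := by linarith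
  refine le_trans (le_of_eq ?_) (le_iSup _ ⟨(1 + t)⁻¹ • u.1, fun i => ?_⟩)
  · congr 1
    simp only [smul_add]
    abel
  · simp only [Pi.smul_apply, smul_eq_mul, abs_mul, abs_inv, abs_of_pos h1]
    refine lt_of_le_of_lt ?_ (u.2 i)
    apply mul_le_of_le_one_left (abs_nonneg _)
    exact inv_le_one_of_one_le₀ (by linarith)

lemma lintegral_reg {c a : ι → ℝ} {lam : ℝ} {g : (ι → ℝ) → ℝ≥0∞}
    (h : ScaleProp c a lam g) (σ : ℝ) (hσ : 0 < σ) :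
    ∫⁻ x, reg σ a g x ≤ ENNReal.ofReal (Real.exp (lam * σ) * (1 + σ) ^ Fintype.card ι) * ∫⁻ x, g x := by
  calc _ ≤ ∫⁻ x, ENNReal.ofReal (Real.exp (lam * σ)) * g ((1 + σ)⁻¹ • (x + σ • c)) := by
        refine lintegral_mono fun x => iSup_le fun u => h σ hσ u.1 (fun i => (u.2 i).le) x
    _ = _ := by
        rw [lintegral_const_mul' _ _ ENNReal.ofReal_ne_top,
          lintegral_add_right_eq_self (fun y => g ((1 + σ)⁻¹ • y)),
          lintegral_smul_scale _ _ (by positivity), ← mul_assoc, ← ENNReal.ofReal_mul (by positivity)]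
        simp

lemma VV_mono (d : ℕ) (a c : ι → ℝ) {g h : (ι → ℝ) → ℝ≥0∞} (hgh : ∀ x, g x ≤ h x) :
    VV d a g c ≤ VV d a h c := by
  unfold VV JJ
  gcongr with S hS
  exact lmarginal_mono (fun x => iSup_mono fun z => hgh _) c

lemma VV_bound' (d m : ℕ) (hdm : d + m = Fintype.card ι) (c a : ι → ℝ) (lam : ℝ) (hlam : 0 ≤ lam)
    (ha : ∀ i, 0 < a i) {g : (ι → ℝ) → ℝ≥0∞} (h : ScaleProp c a lam g) :
    (m.factorial : ℝ≥0∞) * VV d a g c ≤ ENNReal.ofReal (Fintype.card ι + lam) ^ m * ∫⁻ x, g x := by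
  have key : ∀ σ : ℝ, 0 < σ → (m.factorial : ℝ≥0∞) * VV d a g c ≤
      ENNReal.ofReal (Real.exp (lam * σ) * (1 + σ) ^ Fintype.card ι) *
        (ENNReal.ofReal (Fintype.card ι + lam) ^ m * ∫⁻ x, g x) := by
    intro σ hσ
    calc _ ≤ (m.factorial : ℝ≥0∞) * VV d a (reg σ a g) c := by
          gcongr; exact VV_mono d a c (le_reg σ hσ a ha g)
      _ ≤ ENNReal.ofReal (Fintype.card ι + lam) ^ m * ∫⁻ x, reg σ a g x :=
          VV_bound d m hdm c a lam hlam (fun i => (ha i).le) (reg_lsc σ a g) (h.reg σ)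
      _ ≤ ENNReal.ofReal (Fintype.card ι + lam) ^ m * (ENNReal.ofReal (Real.exp (lam * σ) * (1 + σ) ^ Fintype.card ι) * ∫⁻ x, g x) := by
          gcongr; exact lintegral_reg h σ hσ
      _ = _ := by ring
  by_cases hR : ENNReal.ofReal (Fintype.card ι + lam) ^ m * ∫⁻ x, g x = ⊤
  · rw [hR]; exact le_top
  have hlim : Filter.Tendsto (fun σ : ℝ => ENNReal.ofReal (Real.exp (lam * σ) * (1 + σ) ^ Fintype.card ι) *
        (ENNReal.ofReal (Fintype.card ι + lam) ^ m * ∫⁻ x, g x)) (nhdsWithin 0 (Set.Ioi 0))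
        (nhds (1 * (ENNReal.ofReal (Fintype.card ι + lam) ^ m * ∫⁻ x, g x))) := by
    refine ENNReal.Tendsto.mul_const ?_ (Or.inr hR)
    have : Continuous (fun σ : ℝ => ENNReal.ofReal (Real.exp (lam * σ) * (1 + σ) ^ Fintype.card ι)) :=
      ENNReal.continuous_ofReal.comp (by fun_prop)
    have h2 := this.tendsto 0
    simp at h2
    refine Filter.Tendsto.mono_left ?_ nhdsWithin_le_nhds
    exact h2
  rw [one_mul] at hlim
  refine ge_of_tendsto hlim ?_
  filter_upwards [self_mem_nhdsWithin] with σ hσ using key σ hσ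

end part2

section part3

open scoped ENNReal
set_option linter.unusedSectionVars false
set_option linter.unusedVariables false

variable {ι : Type*} [Fintype ι] [DecidableEq ι]

lemma finner_aux (F : Finset (Finset ι)) (p : ℝ) (hp : 0 ≤ p)
    (hcov : ∀ i, ∑ S ∈ F with i ∈ S, p = 1)
    (g : Finset ι → (ι → ℝ) → ℝ≥0∞) (hg : ∀ S, Measurable (g S))
    (hdep : ∀ S x y, (∀ i ∈ S, x i = y i) → g S x = g S y) (T : Finset ι) (x : ι → ℝ) :
    lmarginal (fun _ => volume) T (fun x => ∏ S ∈ F, g S x ^ p) x ≤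
      ∏ S ∈ F, (lmarginal (fun _ => volume) (T ∩ S) (g S) x) ^ p := by
  induction T using Finset.induction_on generalizing x with
  | empty => simp
  | insert i T hi ih =>
    have hm : Measurable (fun x => ∏ S ∈ F, g S x ^ p) :=
      Finset.measurable_fun_prod _ fun S _ => (hg S).pow_const p
    rw [lmarginal_insert _ hm hi]
    refine (lintegral_mono fun t => ih _).trans ?_
    set A : ℝ≥0∞ := ∏ S ∈ F with i ∉ S, (lmarginal (fun _ => volume) (T ∩ S) (g S) x) ^ p with hA
    have e1 : ∀ t : ℝ, ∏ S ∈ F, (lmarginal (fun _ => volume) (T ∩ S) (g S) (Function.update x i t)) ^ p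
        = (∏ S ∈ F with i ∈ S, (lmarginal (fun _ => volume) (T ∩ S) (g S) (Function.update x i t)) ^ p) * A := by
      intro t
      rw [← Finset.prod_filter_mul_prod_filter_not F (fun S => i ∈ S)]
      congr 1
      refine Finset.prod_congr rfl fun S hS => ?_
      congr 1
      unfold lmarginal
      refine lintegral_congr fun y => hdep S _ _ fun j hj => ?_
      have hji : j ≠ i := by rintro rfl; exact (Finset.mem_filter.1 hS).2 hj
      simp [Function.updateFinset, hji]
    simp_rw [e1]
    have hmm : ∀ S, Measurable (fun t => lmarginal (fun _ => volume) (T ∩ S) (g S) (Function.update x i t)) :=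
      fun S => ((hg S).lmarginal _).comp (by fun_prop)
    rw [lintegral_mul_const _ (Finset.measurable_fun_prod _ fun S _ => (hmm S).pow_const p)]
    have h2 := ENNReal.lintegral_prod_norm_pow_le (μ := (volume : Measure ℝ)) (F.filter (fun S => i ∈ S))
      (f := fun S t => lmarginal (fun _ => volume) (T ∩ S) (g S) (Function.update x i t))
      (fun S _ => (hmm S).aemeasurable) (p := fun _ => p) (hcov i) (fun _ _ => hp)
    refine (mul_le_mul_left h2 A).trans (le_of_eq ?_)
    rw [← Finset.prod_filter_mul_prod_filter_not F (fun S => i ∈ S)]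
    congr 1
    · refine Finset.prod_congr rfl fun S hS => ?_
      rw [Finset.insert_inter_of_mem (Finset.mem_filter.1 hS).2, lmarginal_insert _ (hg S) (by simp [hi])]
    · refine Finset.prod_congr rfl fun S hS => ?_
      rw [Finset.insert_inter_of_notMem (Finset.mem_filter.1 hS).2]

lemma finner (F : Finset (Finset ι)) (p : ℝ) (hp : 0 ≤ p)
    (hcov : ∀ i, ∑ S ∈ F with i ∈ S, p = 1)
    (g : Finset ι → (ι → ℝ) → ℝ≥0∞) (hg : ∀ S, Measurable (g S))
    (hdep : ∀ S x y, (∀ i ∈ S, x i = y i) → g S x = g S y) (x : ι → ℝ) :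
    ∫⁻ x, ∏ S ∈ F, g S x ^ p ≤
      ∏ S ∈ F, (lmarginal (fun _ => volume) S (g S) x) ^ p := by
  have := finner_aux F p hp hcov g hg hdep Finset.univ x
  simp only [lmarginal_univ, Finset.univ_inter] at this
  exact this

lemma card_filter_mem (k : ℕ) (i : ι) :
    ((Finset.powersetCard (k + 1) (Finset.univ : Finset ι)).filter (fun S => i ∈ S)).card =
      (Fintype.card ι - 1).choose k := by
  have : (Finset.powersetCard (k + 1) (Finset.univ : Finset ι)).filter (fun S => i ∈ S) =
      (Finset.powersetCard k (Finset.univ.erase i)).image (insert i) := by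
    ext S
    simp only [Finset.mem_filter, Finset.mem_powersetCard, Finset.mem_image]
    constructor
    · rintro ⟨⟨_, h1⟩, h2⟩
      refine ⟨S.erase i, ⟨Finset.erase_subset_erase _ (Finset.subset_univ _), ?_⟩, Finset.insert_erase h2⟩
      rw [Finset.card_erase_of_mem h2, h1]; rfl
    · rintro ⟨S', ⟨h1, h2⟩, rfl⟩
      have : i ∉ S' := fun h => by simpa using h1 h
      exact ⟨⟨Finset.subset_univ _, by rw [Finset.card_insert_of_notMem this, h2]⟩, Finset.mem_insert_self _ _⟩
  rw [this, Finset.card_image_of_injOn, Finset.card_powersetCard, Finset.card_erase_of_mem (Finset.mem_univ _)]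
  · rfl
  · intro S hS S' hS' h
    have h1 : i ∉ S := fun h => by simpa using (Finset.mem_powersetCard.1 hS).1 h
    have h2 : i ∉ S' := fun h => by simpa using (Finset.mem_powersetCard.1 hS').1 h
    have h : insert i S = insert i S' := h
    rw [← Finset.erase_insert h1, h, Finset.erase_insert h2]

/-- Loomis-Whitney -/
lemma loomis (k : ℕ) (hk : 1 ≤ k) (hk2 : k ≤ Fintype.card ι)
    (f : (ι → ℝ) → ℝ≥0∞)
    (hm : ∀ S : Finset ι, AEMeasurable (fun y : S → ℝ => supOff S f (Function.updateFinset 0 S y)) volume) :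
    ∫⁻ x, f x ^ ((Fintype.card ι : ℝ) / k) ≤
      ∏ S ∈ Finset.powersetCard k (Finset.univ : Finset ι),
        JJ S f 0 ^ ((((Fintype.card ι - 1).choose (k - 1) : ℕ) : ℝ)⁻¹) := by
  obtain ⟨k, rfl⟩ : ∃ j, k = j + 1 := ⟨k - 1, by omega⟩
  set N := Fintype.card ι with hN
  simp only [Nat.add_sub_cancel]
  have hNpos : 1 ≤ N := by omega
  have hch : 0 < (N - 1).choose k := Nat.choose_pos (by omega)
  set p : ℝ := (((N - 1).choose k : ℕ) : ℝ)⁻¹ with hp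
  have hp0 : 0 < p := by positivity
  -- measurable versions
  let G : ∀ S : Finset ι, (S → ℝ) → ℝ≥0∞ := fun S => (hm S).mk _
  let g : Finset ι → (ι → ℝ) → ℝ≥0∞ := fun S x => G S (fun i : S => x i)
  have hgm : ∀ S, Measurable (g S) := fun S => (hm S).measurable_mk.comp (by fun_prop)
  have hdep : ∀ S x y, (∀ i ∈ S, x i = y i) → g S x = g S y := by
    intro S x y h
    simp only [g]
    congr 1; ext i; exact h i i.2
  have hfin := finner (Finset.powersetCard (k + 1) (Finset.univ : Finset ι)) p hp0.le ?_ g hgm hdep 0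
  swap
  · intro i
    rw [Finset.sum_const, card_filter_mem, nsmul_eq_mul, hp, mul_inv_cancel₀]
    exact_mod_cast hch.ne'
  have hJ : ∀ S, lmarginal (fun _ => volume) S (g S) 0 = JJ S f 0 := by
    intro S
    unfold JJ lmarginal
    refine lintegral_congr_ae ?_
    filter_upwards [(hm S).ae_eq_mk] with y hy
    rw [hy]
    simp only [g, G]
    congr 1; ext i; simp [Function.updateFinset]
  simp_rw [hJ] at hfin
  refine le_trans (lintegral_mono_ae ?_) hfin
  have hae : ∀ S : Finset ι, ∀ᵐ x : ι → ℝ, f x ≤ g S x := by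
    intro S
    have hq : Measure.QuasiMeasurePreserving (fun (x : ι → ℝ) (i : S) => x i) volume volume := by
      have h1 := (volume_preserving_piEquivPiSubtypeProd (fun _ : ι => ℝ) (fun i => i ∈ S)).quasiMeasurePreserving
      convert Measure.quasiMeasurePreserving_fst.comp h1 <;> rfl
    filter_upwards [hq.ae (hm S).ae_eq_mk] with x hx
    simp only [g, G]
    rw [← hx]
    refine le_trans (le_of_eq ?_) (le_iSup _ x)
    congr 1; ext i; by_cases h : i ∈ S <;> simp [Function.updateFinset, h]
  filter_upwards [ae_all_iff.2 hae] with x hx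
  have e : f x ^ ((N : ℝ) / ((k + 1 : ℕ) : ℝ)) = ∏ S ∈ Finset.powersetCard (k + 1) (Finset.univ : Finset ι), f x ^ p := by
    rw [Finset.prod_const, Finset.card_powersetCard, Finset.card_univ, ← ENNReal.rpow_mul_natCast]
    congr 1
    rw [hp, ← hN]
    have := Nat.add_one_mul_choose_eq (N - 1) k
    rw [Nat.sub_add_cancel hNpos] at this
    have h2 : (N : ℝ) * ((N - 1).choose k : ℕ) = (N.choose (k + 1) : ℕ) * ((k + 1 : ℕ) : ℝ) := by exact_mod_cast this
    have h3 : (((N - 1).choose k : ℕ) : ℝ) ≠ 0 := by exact_mod_cast hch.ne'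
    have h4 : ((k + 1 : ℕ) : ℝ) ≠ 0 := by positivity
    field_simp
    linarith
  rw [e]
  gcongr with S hS
  exact hx S

end part3

section part4

open scoped ENNReal
set_option linter.unusedSectionVars false
set_option linter.unusedVariables false

section basics
variable {E : Type*} [NormedAddCommGroup E] [NormedSpace ℝ E] [FiniteDimensional ℝ E]
  [MeasurableSpace E] [BorelSpace E] (μ : Measure E) [μ.IsAddHaarMeasure]

lemma convex_exists_ball {A : Set E} (hA : Convex ℝ A) (hpos : μ A ≠ 0) :
    ∃ x r, 0 < r ∧ Metric.ball x r ⊆ A := by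
  have h1 : μ (interior A) ≠ 0 := by
    intro h0
    apply hpos
    have : A ⊆ interior A ∪ frontier A := by
      rw [← closure_eq_interior_union_frontier]; exact subset_closure
    refine le_antisymm ((measure_mono this).trans ((measure_union_le _ _).trans ?_)) bot_le
    rw [h0, hA.addHaar_frontier μ]; simp
  obtain ⟨x, hx⟩ := nonempty_of_measure_ne_zero h1
  obtain ⟨r, hr, h⟩ := Metric.isOpen_iff.1 isOpen_interior x hx
  exact ⟨x, r, hr, h.trans interior_subset⟩

lemma convex_bounded {A : Set E} (hA : Convex ℝ A) (hfin : μ A ≠ ∞) {x0 : E} {r : ℝ} (hr : 0 < r)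
    (hb : Metric.ball x0 r ⊆ A) : Bornology.IsBounded A := by
  have hv : μ (Metric.ball (0 : E) (r / 2)) ≠ 0 := (Metric.measure_ball_pos μ _ (by positivity)).ne'
  obtain ⟨N, hN⟩ := ENNReal.exists_nat_mul_gt hv hfin
  have hN0 : N ≠ 0 := by rintro rfl; simp at hN
  have hN1 : (0 : ℝ) < N := by exact_mod_cast Nat.pos_of_ne_zero hN0
  refine (Metric.isBounded_ball (x := x0) (r := 2 * N * r)).subset fun y hy => ?_
  rw [Metric.mem_ball, dist_eq_norm]
  by_contra hcon
  push Not at hcon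
  let p : ℕ → E := fun j => x0 + ((j : ℝ) / (2 * N)) • (y - x0)
  have hsub : ⋃ j ∈ Finset.range N, Metric.ball (p j) (r / 2) ⊆ A := by
    intro z hz
    simp only [Set.mem_iUnion, Finset.mem_range, exists_prop] at hz
    obtain ⟨j, hj, hz⟩ := hz
    set s : ℝ := (j : ℝ) / (2 * N) with hs
    have hs0 : 0 ≤ s := by positivity
    have hs1 : s ≤ 1 / 2 := by
      rw [hs, div_le_div_iff₀ (by positivity) (by norm_num)]
      have : (j : ℝ) ≤ N := by exact_mod_cast hj.le
      linarith
    have hs2 : 0 < 1 - s := by linarith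
    have hw : (1 - s)⁻¹ • (z - s • y) ∈ A := by
      apply hb
      rw [Metric.mem_ball, dist_eq_norm] at hz ⊢
      have e : (1 - s)⁻¹ • (z - s • y) - x0 = (1 - s)⁻¹ • (z - p j) := by
        have : x0 = (1 - s)⁻¹ • ((1 - s) • x0) := by rw [smul_smul, inv_mul_cancel₀ hs2.ne', one_smul]
        nth_rewrite 1 [this]
        rw [← smul_sub]
        congr 1
        simp only [p, ← hs]
        module
      rw [e, norm_smul, Real.norm_of_nonneg (by positivity), inv_mul_lt_iff₀ hs2]
      nlinarith
    have := hA hw hy hs2.le hs0 (by ring)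
    rwa [smul_smul, mul_inv_cancel₀ hs2.ne', one_smul, sub_add_cancel] at this
  have hdisj : (Finset.range N : Set ℕ).PairwiseDisjoint fun j => Metric.ball (p j) (r / 2) := by
    intro i hi j hj hij
    apply Metric.ball_disjoint_ball
    rw [dist_eq_norm]
    have e : p i - p j = (((i : ℝ) - j) / (2 * N)) • (y - x0) := by
      simp only [p]; rw [sub_div]; module
    rw [e, norm_smul, Real.norm_eq_abs, abs_div, abs_of_pos (by positivity : (0:ℝ) < 2 * N)]
    have h1 : (1 : ℝ) ≤ |(i : ℝ) - j| := by
      have : (1 : ℤ) ≤ |(i : ℤ) - j| := Int.one_le_abs (sub_ne_zero.2 (by exact_mod_cast hij))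
      exact_mod_cast this
    rw [div_mul_eq_mul_div, le_div_iff₀ (by positivity)]
    have := mul_le_mul_of_nonneg_right h1 (norm_nonneg (y - x0))
    linarith
  have h3 := measure_mono (μ := μ) hsub
  rw [measure_biUnion_finset hdisj (fun _ _ => measurableSet_ball)] at h3
  simp only [Measure.addHaar_ball_center] at h3
  rw [Finset.sum_const, Finset.card_range, nsmul_eq_mul] at h3
  exact absurd (h3.trans_lt' hN) (lt_irrefl _)

end basics

section q0
variable {n : ℕ} {f : Eucl n → ℝ}

lemma IsLogConcave.quasi (h0 : ∀ x, 0 ≤ f x) (h : IsLogConcave f) {t : ℝ} (ht : 0 ≤ t) :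
    Convex ℝ {x | t ≤ f x} := by
  intro x hx y hy a b ha hb hab
  obtain rfl : b = 1 - a := by linarith
  rcases ha.eq_or_lt with rfl | ha
  · simpa using hy
  rcases hb.eq_or_lt with hb | hb
  · obtain rfl : a = 1 := by linarith
    simpa using hx
  refine le_trans ?_ (h x y a ha (by linarith))
  calc t = t ^ a * t ^ (1 - a) := by
        rcases ht.eq_or_lt with rfl | ht
        · rw [Real.zero_rpow ha.ne']; simp
        · rw [← Real.rpow_add ht]; simp
    _ ≤ _ := by
        have h1 : t ≤ f x := hx
        have h2 : t ≤ f y := hy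
        have h3 := h0 x
        gcongr

lemma MemQ0.closed (h : MemQ0 f) (t : ℝ) : IsClosed {x | t ≤ f x} :=
  h.2.2.1.isClosed_preimage t

lemma MemQ0.finite (h : MemQ0 f) {t : ℝ} (ht : 0 < t) : volume {x | t ≤ f x} ≠ ∞ :=
  (h.2.2.2.1.measure_ge_lt_top ht).ne

lemma MemQ0.exists_level (h : MemQ0 f) : ∃ t, 0 < t ∧ volume {x | t ≤ f x} ≠ 0 := by
  by_contra hcon
  push Not at hcon
  have : ∀ᵐ x, f x = 0 := by
    have h1 : ∀ j : ℕ, ∀ᵐ x, ¬ ((1 : ℝ) / (j + 1) ≤ f x) := fun j => by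
      rw [ae_iff]; simp only [not_not]
      exact hcon (1 / (j + 1)) (by positivity)
    filter_upwards [ae_all_iff.2 h1] with x hx
    by_contra hne
    have : 0 < f x := lt_of_le_of_ne (h.1 x) (Ne.symm hne)
    obtain ⟨j, hj⟩ := exists_nat_one_div_lt this
    exact hx j hj.le
  have h2 := h.2.2.2.2
  rw [integral_congr_ae this] at h2
  simp at h2

lemma MemQ0.ball (h : MemQ0 f) : ∃ t x r, 0 < t ∧ 0 < r ∧ Metric.ball x r ⊆ {x | t ≤ f x} := by
  obtain ⟨t, ht, hv⟩ := h.exists_level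
  obtain ⟨x, r, hr, hb⟩ := convex_exists_ball volume (h.2.1.quasi h.1 ht.le) hv
  exact ⟨t, x, r, ht, hr, hb⟩

lemma MemQ0.bounded (h : MemQ0 f) {t : ℝ} (ht : 0 < t) : Bornology.IsBounded {x | t ≤ f x} := by
  obtain ⟨s, x, r, hs, hr, hb⟩ := h.ball
  have h1 : 0 < min s t := lt_min hs ht
  refine Bornology.IsBounded.subset (convex_bounded volume (h.2.1.quasi h.1 h1.le) (h.finite h1) hr
    (hb.trans fun y hy => show min s t ≤ f y from (min_le_left _ _).trans hy)) fun y hy => show min s t ≤ f y from (min_le_right _ _).trans hy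

lemma MemQ0.compact (h : MemQ0 f) {t : ℝ} (ht : 0 < t) : IsCompact {x | t ≤ f x} :=
  Metric.isCompact_of_isClosed_isBounded (h.closed t) (h.bounded ht)

lemma MemQ0.exists_max (h : MemQ0 f) : ∃ x0, 0 < f x0 ∧ ∀ x, f x ≤ f x0 := by
  obtain ⟨s, x, r, hs, hr, hb⟩ := h.ball
  have hne : {x | s ≤ f x}.Nonempty := ⟨x, hb (Metric.mem_ball_self hr)⟩
  obtain ⟨x0, hx0, hmax⟩ := (h.2.2.1.upperSemicontinuousOn {x | s ≤ f x}).exists_isMaxOn hne (h.compact hs)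
  refine ⟨x0, hs.trans_le hx0, fun y => ?_⟩
  by_cases hy : s ≤ f y
  · exact hmax hy
  · exact (not_le.1 hy).le.trans hx0

lemma supNorm_eq {x0 : Eucl n} (hmax : ∀ x, f x ≤ f x0) : supNorm f = f x0 :=
  le_antisymm (ciSup_le hmax) (le_ciSup (f := f) ⟨f x0, by rintro _ ⟨y, rfl⟩; exact hmax y⟩ x0)

/-- volume of the level set at height `4^{-n} M` -/
lemma MemQ0.level_volume (h : MemQ0 f) (hn : 2 ≤ n) {x0 : Eucl n} (hpos : 0 < f x0)
    (hmax : ∀ x, f x ≤ f x0) :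
    ∫ x, f x ≤ 5 / 3 * f x0 * (volume {x | (4 : ℝ)⁻¹ ^ n * f x0 ≤ f x}).toReal := by
  set M := f x0 with hM
  set δ : ℝ := (4 : ℝ)⁻¹ ^ n with hδ
  have hδ0 : 0 < δ := by positivity
  set L := {x | δ * M ≤ f x} with hL
  have hLm : MeasurableSet L := (h.closed _).measurableSet
  have hLf : volume L ≠ ∞ := h.finite (by positivity)
  let F : Eucl n → ℝ≥0∞ := fun x => ENNReal.ofReal (f x)
  let D : Eucl n → Eucl n := fun x => (2 : ℝ)⁻¹ • x + (2 : ℝ)⁻¹ • x0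
  have hpt : ∀ x, F x ≤ ENNReal.ofReal M * L.indicator 1 x + ENNReal.ofReal (δ * M) * L.indicator 1 (D x)
      + ENNReal.ofReal δ * F (D x) := by
    intro x
    by_cases hx : x ∈ L
    · refine le_trans ?_ (le_add_right (le_add_right (le_refl _)))
      simp only [Set.indicator_of_mem hx, Pi.one_apply, mul_one]
      exact ENNReal.ofReal_le_ofReal (hmax x)
    have hx' : f x < δ * M := not_le.1 hx
    by_cases hd : D x ∈ L
    · refine le_trans ?_ (le_add_right (le_add_left (le_refl _)))
      simp only [Set.indicator_of_mem hd, Pi.one_apply, mul_one]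
      exact ENNReal.ofReal_le_ofReal hx'.le
    · refine le_trans ?_ (le_add_left (le_refl _))
      have hd' : f (D x) < δ * M := not_le.1 hd
      simp only [F]
      rw [← ENNReal.ofReal_mul hδ0.le]
      apply ENNReal.ofReal_le_ofReal
      have h1 := h.2.1 x x0 (1 / 2) (by norm_num) (by norm_num)
      have e : (1 / 2 : ℝ) • x + (1 - 1 / 2 : ℝ) • x0 = D x := by simp only [D]; norm_num
      rw [e, (by norm_num : (1 : ℝ) - 1 / 2 = 1 / 2), ← Real.mul_rpow (h.1 _) (h.1 _), ← Real.sqrt_eq_rpow] at h1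
      have h2 : f x * M ≤ f (D x) ^ 2 := by
        rw [← Real.sqrt_le_left (h.1 _)]; exact h1
      have h3 := h.1 (D x)
      have : f x * M ≤ δ * f (D x) * M := by nlinarith
      exact le_of_mul_le_mul_right this hpos
  have hcv : ∀ G : Eucl n → ℝ≥0∞, ∫⁻ x, G (D x) = ENNReal.ofReal (2 ^ n) * ∫⁻ x, G x := by
    intro G
    have := lintegral_smul_scale (E := Eucl n) (volume : Measure (Eucl n)) 2 (by norm_num) (fun z => G (z + (2 : ℝ)⁻¹ • x0))
    simp only [D]
    rw [this, lintegral_add_right_eq_self]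
    simp
  have hFm : Measurable F := h.2.2.1.measurable.ennreal_ofReal
  have hDm : Measurable D := by simp only [D]; fun_prop
  have hIntF : ∫⁻ x, F x ≤ ENNReal.ofReal M * volume L + ENNReal.ofReal (δ * M) * (ENNReal.ofReal (2 ^ n) * volume L)
      + ENNReal.ofReal δ * (ENNReal.ofReal (2 ^ n) * ∫⁻ x, F x) := by
    refine (lintegral_mono hpt).trans (le_of_eq ?_)
    have hi : Measurable (L.indicator (1 : Eucl n → ℝ≥0∞)) := measurable_one.indicator hLm
    rw [lintegral_add_left, lintegral_add_left, lintegral_const_mul _ hi, lintegral_const_mul _ (show Measurable fun x => L.indicator (1 : Eucl n → ℝ≥0∞) (D x) from hi.comp hDm),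
      lintegral_const_mul _ (show Measurable fun x => F (D x) from hFm.comp hDm), hcv, hcv, lintegral_indicator_one hLm]
    · exact hi.const_mul _
    · exact (hi.const_mul _).add ((hi.comp hDm).const_mul _)
  have hFI : ∫⁻ x, F x = ENNReal.ofReal (∫ x, f x) :=
    (ofReal_integral_eq_lintegral_ofReal h.2.2.2.1 (Filter.Eventually.of_forall h.1)).symm
  rw [hFI] at hIntF
  set I := ∫ x, f x with hI
  have hI0 : 0 < I := h.2.2.2.2
  set v := (volume L).toReal with hv
  have hvL : volume L = ENNReal.ofReal v := (ENNReal.ofReal_toReal hLf).symm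
  have hv0 : 0 ≤ v := ENNReal.toReal_nonneg
  rw [hvL, ← ENNReal.ofReal_mul (by positivity), ← ENNReal.ofReal_mul (by positivity), ← ENNReal.ofReal_mul (by positivity),
    ← ENNReal.ofReal_mul (by positivity), ← ENNReal.ofReal_mul (by positivity), ← ENNReal.ofReal_add (by positivity) (by positivity),
    ← ENNReal.ofReal_add (by positivity) (by positivity), ENNReal.ofReal_le_ofReal_iff (by positivity)] at hIntF
  have hε : δ * 2 ^ n ≤ 1 / 4 := by
    rw [hδ, ← mul_pow]
    calc ((4 : ℝ)⁻¹ * 2) ^ n ≤ ((4 : ℝ)⁻¹ * 2) ^ 2 := pow_le_pow_of_le_one (by norm_num) (by norm_num) hn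
      _ = _ := by norm_num
  have hMv : 0 ≤ M * v := by positivity
  have e : M * v + δ * M * (2 ^ n * v) + δ * (2 ^ n * I) = M * v + (δ * 2 ^ n) * (M * v) + (δ * 2 ^ n) * I := by ring
  rw [e] at hIntF
  nlinarith

/-- symmetrization -/
lemma symm_center {L : Set (Eucl n)} (hc : IsCompact L) (hconv : Convex ℝ L) (hpos : volume L ≠ 0) :
    ∃ c, volume L ≤ ENNReal.ofReal (2 ^ n) * volume {v | c + v ∈ L ∧ c - v ∈ L} := by
  have hm : MeasurableSet L := hc.isClosed.measurableSet
  have hfin : volume L ≠ ∞ := hc.measure_ne_top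
  let φ : Eucl n → ℝ≥0∞ := fun x => ∫⁻ y, L.indicator 1 y * L.indicator 1 (x - y)
  have hi : Measurable (L.indicator (1 : Eucl n → ℝ≥0∞)) := measurable_one.indicator hm
  let L2 : Set (Eucl n) := (fun x => (2 : ℝ)⁻¹ • x) ⁻¹' L
  have hL2m : MeasurableSet L2 := (measurable_const_smul _) hm
  have hL2 : volume L2 = ENNReal.ofReal (2 ^ n) * volume L := by
    have := lintegral_smul_scale (E := Eucl n) (volume : Measure (Eucl n)) 2 (by norm_num) (L.indicator 1)
    rw [lintegral_indicator_one hm] at this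
    have e : ∫⁻ x, L.indicator (1 : Eucl n → ℝ≥0∞) ((2 : ℝ)⁻¹ • x) = ∫⁻ x, L2.indicator 1 x := rfl
    rw [e, lintegral_indicator_one hL2m] at this
    rw [this]; simp
  have htot : ∫⁻ x, φ x = volume L * volume L := by
    simp only [φ]
    rw [lintegral_lintegral_swap]
    · have : ∀ y, ∫⁻ x, L.indicator (1 : Eucl n → ℝ≥0∞) y * L.indicator 1 (x - y) = L.indicator 1 y * volume L := by
        intro y
        rw [lintegral_const_mul _ (by fun_prop), lintegral_sub_right_eq_self (fun x => L.indicator (1 : Eucl n → ℝ≥0∞) x), lintegral_indicator_one hm]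
      simp_rw [this]
      rw [lintegral_mul_const _ hi, lintegral_indicator_one hm]
    · apply Measurable.aemeasurable
      exact (hi.comp measurable_snd).mul (hi.comp (measurable_fst.sub measurable_snd))
  have hsupp : ∫⁻ x in L2, φ x = volume L * volume L := by
    rw [← htot]
    apply setLIntegral_eq_of_support_subset
    intro x hx
    by_contra hxL
    apply hx
    simp only [φ]
    rw [lintegral_eq_zero_iff (by fun_prop)]
    refine Filter.Eventually.of_forall fun y => ?_
    by_contra hne
    simp only [Pi.zero_apply, mul_eq_zero, Set.indicator_apply_eq_zero, not_or] at hne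
    push Not at hne
    apply hxL
    have := hconv hne.1.1 hne.2.1 (by norm_num : (0 : ℝ) ≤ 2⁻¹) (by norm_num : (0 : ℝ) ≤ 2⁻¹) (by norm_num)
    rw [← smul_add, add_sub_cancel] at this
    exact this
  have h2n : ENNReal.ofReal (2 ^ n) ≠ 0 := by simp
  have hL2ne : volume L2 ≠ 0 := by rw [hL2]; exact mul_ne_zero h2n hpos
  obtain ⟨x, hx, hle⟩ := exists_setLAverage_le hL2ne hL2m.nullMeasurableSet
    (f := φ) (by rw [hsupp]; exact ENNReal.mul_ne_top hfin hfin)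
  refine ⟨(2 : ℝ)⁻¹ • x, ?_⟩
  rw [setLAverage_eq, hsupp, hL2, ENNReal.mul_div_mul_right _ _ hpos hfin] at hle
  have e : φ x = volume {v | (2 : ℝ)⁻¹ • x + v ∈ L ∧ (2 : ℝ)⁻¹ • x - v ∈ L} := by
    rw [← lintegral_indicator_one]
    · simp only [φ]
      rw [← lintegral_add_left_eq_self _ ((2 : ℝ)⁻¹ • x)]
      refine lintegral_congr fun v => ?_
      have : x - ((2 : ℝ)⁻¹ • x + v) = (2 : ℝ)⁻¹ • x - v := by module
      rw [this]
      by_cases h1 : (2 : ℝ)⁻¹ • x + v ∈ L <;> by_cases h2 : (2 : ℝ)⁻¹ • x - v ∈ L <;> simp [Set.indicator, h1, h2]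
    · exact ((measurable_const_add _) hm).inter ((measurable_const_sub _) hm)
  rw [e] at hle
  rwa [ENNReal.div_le_iff_le_mul (Or.inl h2n) (Or.inl ENNReal.ofReal_ne_top), mul_comm] at hle

end q0

end part4

section part5

open scoped ENNReal
set_option linter.unusedSectionVars false
set_option linter.unusedVariables false

section john
variable {n : ℕ}

/-- the stretching map in the direction `y` -/
def stretch (b a : ℝ) (y : Eucl n) : Eucl n →ₗ[ℝ] Eucl n :=
  b • LinearMap.transvection ((innerₛₗ ℝ y : Module.Dual ℝ (Eucl n))) (((a / b - 1) / ‖y‖ ^ 2) • y)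

lemma stretch_apply {b a : ℝ} (hb : b ≠ 0) (y v : Eucl n) :
    stretch b a y v = b • v + ((a - b) * inner ℝ y v / ‖y‖ ^ 2) • y := by
  simp only [stretch, LinearMap.smul_apply, LinearMap.transvection.apply, innerₛₗ_apply_apply, smul_add, smul_smul]
  congr 2
  field_simp

lemma stretch_det {b a : ℝ} (hb : b ≠ 0) (y : Eucl n) (hy : y ≠ 0) :
    LinearMap.det (stretch b a y) = b ^ n * (a / b) := by
  have : ‖y‖ ≠ 0 := norm_ne_zero_iff.2 hy
  rw [stretch, LinearMap.det_smul, LinearMap.transvection.det]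
  simp only [innerₛₗ_apply_apply, inner_smul_right, real_inner_self_eq_norm_sq, finrank_euclideanSpace, Fintype.card_fin]
  field_simp
  ring

lemma stretch_symm {b a : ℝ} (hb : b ≠ 0) (y v w : Eucl n) :
    inner ℝ w (stretch b a y v) = inner ℝ (stretch b a y w) v := by
  rw [stretch_apply hb, stretch_apply hb]
  simp only [inner_add_right, inner_add_left, inner_smul_right, inner_smul_left, real_inner_comm]
  simp
  ring

lemma stretch_norm {b a : ℝ} (hb : b ≠ 0) (y w : Eucl n) (hy : y ≠ 0) :
    ‖stretch b a y w‖ ^ 2 = b ^ 2 * ‖w‖ ^ 2 + (a ^ 2 - b ^ 2) / ‖y‖ ^ 2 * (inner ℝ y w) ^ 2 := by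
  have : ‖y‖ ≠ 0 := norm_ne_zero_iff.2 hy
  rw [stretch_apply hb, norm_add_sq_real, norm_smul, norm_smul, inner_smul_left, inner_smul_right, mul_pow, mul_pow]
  simp only [Real.norm_eq_abs, sq_abs]
  rw [real_inner_comm y w]
  simp
  field_simp
  ring

/-- John position for a symmetric convex body -/
lemma john (hn : 1 ≤ n) {K : Set (Eucl n)} (hK : IsCompact K) (hconv : Convex ℝ K) (hsymm : ∀ x ∈ K, -x ∈ K)
    {r : ℝ} (hr : 0 < r) (hball : Metric.ball 0 r ⊆ K) :
    ∃ T : Eucl n →L[ℝ] Eucl n, T.det ≠ 0 ∧ (∀ v, ‖v‖ ≤ 1 → T v ∈ K) ∧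
      ∀ x ∈ K, ∃ y, T y = x ∧ ‖y‖ ^ 2 ≤ n := by
  let A : Set (Eucl n →L[ℝ] Eucl n) := {T | ∀ v, ‖v‖ ≤ 1 → T v ∈ K}
  have hAcl : IsClosed A := by
    have : A = ⋂ v : Eucl n, ⋂ _ : ‖v‖ ≤ 1, (fun T : Eucl n →L[ℝ] Eucl n => T v) ⁻¹' K := by
      ext T; simp [A]
    rw [this]
    refine isClosed_iInter fun v => isClosed_iInter fun _ => hK.isClosed.preimage ?_
    fun_prop
  obtain ⟨R, hR⟩ := hK.isBounded.exists_norm_le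
  have hR0 : 0 ≤ R := (norm_nonneg _).trans (hR 0 (hball (Metric.mem_ball_self hr)))
  have hAb : Bornology.IsBounded A := by
    refine (Metric.isBounded_closedBall (x := (0 : Eucl n →L[ℝ] Eucl n)) (r := R)).subset fun T hT => ?_
    rw [mem_closedBall_zero_iff]
    exact ContinuousLinearMap.opNorm_le_of_unit_norm hR0 fun x hx => hR _ (hT x hx.le)
  have hAc : IsCompact A := Metric.isCompact_of_isClosed_isBounded hAcl hAb
  have h0A : (r / 2) • ContinuousLinearMap.id ℝ (Eucl n) ∈ A := by
    intro v hv
    apply hball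
    simp only [ContinuousLinearMap.smul_apply, ContinuousLinearMap.id_apply, Metric.mem_ball, dist_zero_right, norm_smul, Real.norm_eq_abs]
    rw [abs_of_pos (by positivity)]
    nlinarith
  have hdc : ContinuousOn (fun T : Eucl n →L[ℝ] Eucl n => |T.det|) A :=
    (ContinuousLinearMap.continuous_det.abs).continuousOn
  obtain ⟨T, hTA, hTmax⟩ := hAc.exists_isMaxOn ⟨_, h0A⟩ hdc
  have hdet0 : 0 < |T.det| := by
    refine lt_of_lt_of_le ?_ (hTmax h0A)
    have : ((r / 2) • ContinuousLinearMap.id ℝ (Eucl n)).det = (r / 2) ^ n := by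
      unfold ContinuousLinearMap.det
      rw [show (((r / 2) • ContinuousLinearMap.id ℝ (Eucl n) : Eucl n →L[ℝ] Eucl n) : Eucl n →ₗ[ℝ] Eucl n) = (r / 2) • LinearMap.id from rfl,
        LinearMap.det_smul]
      simp
    simp only [this]
    positivity
  have hdetne : T.det ≠ 0 := abs_pos.1 hdet0
  refine ⟨T, hdetne, hTA, fun x hx => ?_⟩
  let Te := (T : Eucl n →ₗ[ℝ] Eucl n).equivOfDetNeZero hdetne
  obtain ⟨y, hy⟩ : ∃ y, T y = x := ⟨Te.symm x, Te.apply_symm_apply x⟩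
  refine ⟨y, hy, ?_⟩
  by_contra hcon
  push Not at hcon
  set P : ℝ := ‖y‖ ^ 2 with hP
  have hn1 : (1 : ℝ) ≤ n := by exact_mod_cast hn
  have hy0 : y ≠ 0 := by
    rintro rfl
    simp at hP; linarith
  set ε : ℝ := (P - n) / (n * P + 1) with hε
  have hden : 0 < n * P + 1 := by nlinarith
  have hε0 : 0 < ε := div_pos (by linarith) hden
  have hε1 : ε < 1 := by rw [hε, div_lt_one hden]; nlinarith
  have hεe : ε * (n * P + 1) = P - n := by rw [hε, div_mul_cancel₀ _ hden.ne']
  set b : ℝ := Real.sqrt (1 - ε) with hb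
  set a : ℝ := Real.sqrt (1 + (P - 1) * ε) with ha
  have hb2 : b ^ 2 = 1 - ε := Real.sq_sqrt (by linarith)
  have ha2 : a ^ 2 = 1 + (P - 1) * ε := Real.sq_sqrt (by nlinarith)
  have hbpos : 0 < b := Real.sqrt_pos.2 (by linarith)
  have hapos : 0 < a := Real.sqrt_pos.2 (by nlinarith)
  let T' : Eucl n →L[ℝ] Eucl n := T.comp (LinearMap.toContinuousLinearMap (stretch b a y))
  have hT'A : T' ∈ A := by
    intro v hv
    by_contra hnot
    let K' : Set (Eucl n) := T ⁻¹' K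
    have hK'c : IsClosed K' := hK.isClosed.preimage T.continuous
    have hK'conv : Convex ℝ K' := hconv.linear_preimage (T : Eucl n →ₗ[ℝ] Eucl n)
    have hnot' : stretch b a y v ∉ K' := hnot
    obtain ⟨φ, u, h1, h2⟩ := geometric_hahn_banach_closed_point hK'conv hK'c hnot'
    set w := (InnerProductSpace.toDual ℝ (Eucl n)).symm φ with hw
    have hφ : ∀ z, φ z = inner ℝ w z := fun z => by rw [hw, InnerProductSpace.toDual_symm_apply]
    have hyK : y ∈ K' := by show T y ∈ K; rwa [hy]
    have hyK' : -y ∈ K' := by show T (-y) ∈ K; rw [map_neg, hy]; exact hsymm x hx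
    have h3 : inner ℝ y w < u := by rw [real_inner_comm, ← hφ]; exact h1 y hyK
    have h4 : - inner ℝ y w < u := by
      have := h1 _ hyK'
      rwa [hφ, inner_neg_right, real_inner_comm] at this
    have hu0 : 0 < u := by linarith
    have h5 : ‖w‖ ≤ u := by
      by_cases hw0 : w = 0
      · rw [hw0, norm_zero]; exact hu0.le
      have hwn : ‖w‖ ≠ 0 := norm_ne_zero_iff.2 hw0
      have hmem : ‖w‖⁻¹ • w ∈ K' := hTA _ (by rw [norm_smul, norm_inv, norm_norm, inv_mul_cancel₀ hwn])
      have := h1 _ hmem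
      rw [hφ, inner_smul_right, real_inner_self_eq_norm_sq] at this
      have e : ‖w‖⁻¹ * ‖w‖ ^ 2 = ‖w‖ := by field_simp
      rw [e] at this
      exact this.le
    have h6 : ‖stretch b a y w‖ ≤ u := by
      rw [← sq_le_sq₀ (norm_nonneg _) hu0.le, stretch_norm hbpos.ne' y w hy0, ha2, hb2, ← hP]
      have hPpos : 0 < P := by linarith
      have e : (1 + (P - 1) * ε - (1 - ε)) / P = ε := by field_simp; ring
      rw [e]
      have h7 : (inner ℝ y w : ℝ) ^ 2 ≤ u ^ 2 := by
        rw [sq_le_sq, abs_of_pos hu0, abs_le]; constructor <;> linarith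
      have h8 : ‖w‖ ^ 2 ≤ u ^ 2 := by gcongr
      nlinarith
    have h9 : φ (stretch b a y v) ≤ u := by
      rw [hφ, stretch_symm hbpos.ne']
      refine (real_inner_le_norm _ _).trans ?_
      have := norm_nonneg (stretch b a y w)
      nlinarith
    linarith
  have hdet' : T'.det = T.det * (b ^ n * (a / b)) := by
    unfold ContinuousLinearMap.det
    rw [← stretch_det hbpos.ne' y hy0, ← LinearMap.det_comp]
    rfl
  have hle : |T'.det| ≤ |T.det| := hTmax hT'A
  rw [hdet', abs_mul, abs_of_pos (by positivity : 0 < b ^ n * (a / b))] at hle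
  have hle1 : b ^ n * (a / b) ≤ 1 := by
    by_contra hc
    push Not at hc
    nlinarith
  have hsq : (b ^ n * (a / b)) ^ 2 ≤ 1 := by
    have : 0 < b ^ n * (a / b) := by positivity
    nlinarith
  have e2 : (b ^ n * (a / b)) ^ 2 = (1 - ε) ^ (n - 1) * (1 + (P - 1) * ε) := by
    obtain ⟨m, rfl⟩ : ∃ m, n = m + 1 := ⟨n - 1, by omega⟩
    rw [← ha2, ← hb2, ← pow_mul]
    simp only [Nat.add_sub_cancel]
    field_simp
    ring
  rw [e2] at hsq
  have hbern : 1 - (n - 1) * ε ≤ (1 - ε) ^ (n - 1) := by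
    have := one_add_mul_le_pow (a := -ε) (by linarith) (n - 1)
    rw [Nat.cast_sub hn] at this
    simp only [Nat.cast_one] at this
    calc _ = 1 + ((n : ℝ) - 1) * -ε := by ring
      _ ≤ _ := this
      _ = _ := by ring
  have hP1 : 0 ≤ P - 1 := by linarith
  have h10 : (1 - (n - 1) * ε) * (1 + (P - 1) * ε) ≤ 1 :=
    (mul_le_mul_of_nonneg_right hbern (by positivity)).trans hsq
  have e3 : (1 - (n - 1) * ε) * (1 + (P - 1) * ε) = 1 + ε * ((P - n) - ((n - 1) * (P - 1) * ε)) := by ring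
  rw [e3] at h10
  have h11 : 0 < (P - n) - ((n - 1) * (P - 1) * ε) := by
    rw [← hεe]
    have : 0 < ε * (n * P + 1 - (n - 1) * (P - 1)) := mul_pos hε0 (by nlinarith)
    linarith
  have := mul_pos hε0 h11
  linarith

lemma ball_volume (hn : 1 ≤ n) :
    volume (Metric.closedBall (0 : Eucl n) (Real.sqrt n)) ≤ ENNReal.ofReal (Real.sqrt (2 * Real.pi * Real.exp 1) ^ n) := by
  have hg := GaussianFourier.integral_rexp_neg_mul_sq_norm (V := Eucl n) (b := 1 / 2) (by norm_num)
  have hIntF : Integrable (fun v : Eucl n => Real.exp (-(1 / 2) * ‖v‖ ^ 2)) := by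
    by_contra hc
    rw [integral_undef hc] at hg
    have : (0 : ℝ) < (Real.pi / (1 / 2)) ^ (Module.finrank ℝ (Eucl n) / 2 : ℝ) := by positivity
    linarith
  have h1 : volume (Metric.closedBall (0 : Eucl n) (Real.sqrt n)) ≤
      ∫⁻ v : Eucl n, ENNReal.ofReal (Real.exp (n / 2) * Real.exp (-(1 / 2) * ‖v‖ ^ 2)) := by
    rw [← lintegral_indicator_one measurableSet_closedBall]
    refine lintegral_mono fun v => ?_
    by_cases hv : v ∈ Metric.closedBall (0 : Eucl n) (Real.sqrt n)
    · simp only [Set.indicator_of_mem hv, Pi.one_apply]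
      rw [← ENNReal.ofReal_one, ← Real.exp_add]
      apply ENNReal.ofReal_le_ofReal
      rw [Real.one_le_exp_iff]
      rw [mem_closedBall_zero_iff, Real.le_sqrt (norm_nonneg _) (by positivity)] at hv
      linarith
    · simp [Set.indicator_of_notMem hv]
  refine h1.trans ?_
  rw [← ofReal_integral_eq_lintegral_ofReal (hIntF.const_mul _) (Filter.Eventually.of_forall fun v => by positivity),
    integral_const_mul, hg]
  apply ENNReal.ofReal_le_ofReal
  simp only [finrank_euclideanSpace, Fintype.card_fin]
  rw [Real.sqrt_eq_rpow, ← Real.rpow_natCast, ← Real.rpow_mul (by positivity), Real.mul_rpow (by positivity) (by positivity),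
    ← Real.exp_mul, mul_comm]
  apply le_of_eq
  congr 2 <;> ring

lemma det_adj (T : Eucl n →L[ℝ] Eucl n) : LinearMap.det (LinearMap.adjoint (T : Eucl n →ₗ[ℝ] Eucl n)) = T.det := by
  let b := EuclideanSpace.basisFun (Fin n) ℝ
  rw [ContinuousLinearMap.det, ← LinearMap.det_toMatrix b.toBasis, ← LinearMap.det_toMatrix b.toBasis, LinearMap.toMatrix_adjoint,
    Matrix.det_conjTranspose]
  simp

lemma john_box (hn : 1 ≤ n) {K : Set (Eucl n)} (hK : IsCompact K) (hconv : Convex ℝ K) (hsymm : ∀ x ∈ K, -x ∈ K)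
    {r : ℝ} (hr : 0 < r) (hball : Metric.ball 0 r ⊆ K) :
    ∃ (u : OrthonormalBasis (Fin n) ℝ (Eucl n)) (a : Fin n → ℝ), (∀ i, 0 < a i) ∧
      (∀ q : Fin n → ℝ, (∀ i, |q i| ≤ a i) → ∑ i, q i • u i ∈ K) ∧
      volume K ≤ ENNReal.ofReal ((Real.sqrt (2 * Real.pi * Real.exp 1 * n) / 2) ^ n * ∏ i, (2 * a i)) := by
  obtain ⟨T, hdet, hTB, hTK⟩ := john hn hK hconv hsymm hr hball
  let T0 : Eucl n →ₗ[ℝ] Eucl n := T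
  let B : Eucl n →ₗ[ℝ] Eucl n := T0 ∘ₗ LinearMap.adjoint T0
  have hB : B.IsSymmetric := by
    intro x y
    simp only [B, LinearMap.comp_apply]
    rw [← LinearMap.adjoint_inner_right, LinearMap.adjoint_inner_left]
  have hfr : Module.finrank ℝ (Eucl n) = n := by simp
  let u := hB.eigenvectorBasis hfr
  let l := hB.eigenvalues hfr
  have hBu : ∀ i, B (u i) = l i • u i := fun i => hB.apply_eigenvectorBasis hfr i
  have hBdet : LinearMap.det B = T.det ^ 2 := by
    rw [LinearMap.det_comp, det_adj, sq]
  have hprod : ∏ i, l i = T.det ^ 2 := by rw [← hBdet]; exact (hB.det_eq_prod_eigenvalues hfr).symm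
  have hnn : ∀ i, 0 ≤ l i := by
    intro i
    have h1 : inner ℝ (B (u i)) (u i) = l i := by
      rw [hBu, inner_smul_left, real_inner_self_eq_norm_sq, u.norm_eq_one]; simp
    rw [← h1]
    simp only [B, LinearMap.comp_apply]
    rw [← LinearMap.adjoint_inner_right]
    exact real_inner_self_nonneg
  have hne : ∀ i, l i ≠ 0 := by
    have : ∏ i, l i ≠ 0 := by rw [hprod]; positivity
    intro i
    exact Finset.prod_ne_zero_iff.1 this i (Finset.mem_univ i)
  have hlpos : ∀ i, 0 < l i := fun i => lt_of_le_of_ne (hnn i) (hne i).symm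
  have hn0 : (0 : ℝ) < n := by exact_mod_cast hn
  refine ⟨u, fun i => Real.sqrt (l i / n), fun i => Real.sqrt_pos.2 (div_pos (hlpos i) hn0), ?_, ?_⟩
  · intro q hq
    let z : Eucl n := ∑ i, (q i / l i) • u i
    have hBz : B z = ∑ i, q i • u i := by
      simp only [z, map_sum, map_smul, hBu, smul_smul]
      refine Finset.sum_congr rfl fun i _ => ?_
      rw [div_mul_cancel₀ _ (hne i)]
    rw [← hBz]
    apply hTB
    have h1 : ‖LinearMap.adjoint T0 z‖ ^ 2 = inner ℝ (B z) z := by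
      rw [← real_inner_self_eq_norm_sq, LinearMap.adjoint_inner_right]
      rfl
    have h2 : inner ℝ (B z) z = ∑ i, q i ^ 2 / l i := by
      rw [hBz]
      simp only [z]
      simp [sum_inner, inner_sum, inner_smul_left, inner_smul_right, orthonormal_iff_ite.1 u.orthonormal]
      refine Finset.sum_congr rfl fun i _ => ?_
      ring
    have h3 : ∑ i, q i ^ 2 / l i ≤ 1 := by
      calc ∑ i, q i ^ 2 / l i ≤ ∑ i : Fin n, (1 : ℝ) / n := by
            refine Finset.sum_le_sum fun i _ => ?_
            have := (Real.le_sqrt (abs_nonneg _) (div_nonneg (hnn i) hn0.le)).1 (hq i)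
            rw [sq_abs] at this
            rw [div_le_iff₀ (hlpos i)]
            calc _ ≤ _ := this
              _ = _ := by ring
        _ = 1 := by simp; field_simp
    have : ‖LinearMap.adjoint T0 z‖ ^ 2 ≤ 1 := by rw [h1, h2]; exact h3
    have h0 := norm_nonneg (LinearMap.adjoint T0 z)
    nlinarith
  · have hsub : K ⊆ T0 '' Metric.closedBall 0 (Real.sqrt n) := by
      intro x hx
      obtain ⟨y, hy, hyn⟩ := hTK x hx
      refine ⟨y, ?_, hy⟩
      rw [mem_closedBall_zero_iff]
      exact Real.le_sqrt_of_sq_le hyn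
    refine (measure_mono hsub).trans ?_
    rw [Measure.addHaar_image_linearMap]
    refine (mul_le_mul_right (ball_volume hn) _).trans ?_
    rw [← ENNReal.ofReal_mul (abs_nonneg _)]
    apply ENNReal.ofReal_le_ofReal
    have h1 : ∏ i, (2 * Real.sqrt (l i / n)) = 2 ^ n * |T.det| / Real.sqrt n ^ n := by
      rw [Finset.prod_mul_distrib]
      simp only [Real.sqrt_div (hnn _)]
      rw [Finset.prod_div_distrib, ← Real.sqrt_prod _ (fun i _ => hnn i), hprod, Real.sqrt_sq_eq_abs]
      simp
      ring
    rw [h1]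
    have hs : 0 < Real.sqrt n := Real.sqrt_pos.2 hn0
    rw [Real.sqrt_mul (by positivity) (n : ℝ), div_pow, mul_pow]
    apply le_of_eq
    show |T.det| * _ = _
    field_simp

end john

end part5

section part6

open scoped ENNReal
set_option linter.unusedSectionVars false
set_option linter.unusedVariables false

section coords
variable {n : ℕ}

lemma MemQ0.box {f : Eucl n → ℝ} (h : MemQ0 f) (hn : 2 ≤ n) {x0 : Eucl n} (hpos : 0 < f x0)
    (hmax : ∀ x, f x ≤ f x0) :
    ∃ (u : OrthonormalBasis (Fin n) ℝ (Eucl n)) (a : Fin n → ℝ) (c : Eucl n), (∀ i, 0 < a i) ∧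
      (∀ q : Fin n → ℝ, (∀ i, |q i| ≤ a i) → (4 : ℝ)⁻¹ ^ n * f x0 ≤ f (c + ∑ i, q i • u i)) ∧
      ∫ x, f x ≤ 5 / 3 * f x0 * (Real.sqrt (2 * Real.pi * Real.exp 1 * n) ^ n * ∏ i, (2 * a i)) := by
  set δ : ℝ := (4 : ℝ)⁻¹ ^ n * f x0 with hδ
  have hδ0 : 0 < δ := by positivity
  set L := {x | δ ≤ f x} with hL
  have hlv := h.level_volume hn hpos hmax
  rw [← hδ, ← hL] at hlv
  have hLc : IsCompact L := h.compact hδ0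
  have hLconv : Convex ℝ L := h.2.1.quasi h.1 hδ0.le
  have hLpos : volume L ≠ 0 := by
    intro h0
    rw [h0] at hlv
    have := h.2.2.2.2
    simp at hlv
    linarith
  obtain ⟨c, hc⟩ := symm_center hLc hLconv hLpos
  set K := {v | c + v ∈ L ∧ c - v ∈ L} with hK
  have hKeq : K = ((fun v => c + v) ⁻¹' L) ∩ ((fun v => c - v) ⁻¹' L) := rfl
  have hKcl : IsClosed K := by
    rw [hKeq]
    exact (hLc.isClosed.preimage (by fun_prop)).inter (hLc.isClosed.preimage (by fun_prop))
  have hKb : Bornology.IsBounded K := by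
    obtain ⟨R, hR⟩ := hLc.isBounded.exists_norm_le
    refine (Metric.isBounded_closedBall (x := (0 : Eucl n)) (r := R + ‖c‖)).subset fun v hv => ?_
    rw [mem_closedBall_zero_iff]
    have := hR _ hv.1
    calc ‖v‖ = ‖(c + v) - c‖ := by congr 1; abel
      _ ≤ ‖c + v‖ + ‖c‖ := norm_sub_le _ _
      _ ≤ _ := by linarith
  have hKc : IsCompact K := Metric.isCompact_of_isClosed_isBounded hKcl hKb
  have hKconv : Convex ℝ K := by
    intro x hx y hy s t hs ht hst
    constructor
    · have := hLconv hx.1 hy.1 hs ht hst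
      have e : s • (c + x) + t • (c + y) = c + (s • x + t • y) := by
        calc _ = (s + t) • c + (s • x + t • y) := by module
          _ = _ := by rw [hst, one_smul]
      rwa [e] at this
    · have := hLconv hx.2 hy.2 hs ht hst
      have e : s • (c - x) + t • (c - y) = c - (s • x + t • y) := by
        calc _ = (s + t) • c - (s • x + t • y) := by module
          _ = _ := by rw [hst, one_smul]
      rwa [e] at this
  have hKsymm : ∀ x ∈ K, -x ∈ K := by
    intro x hx
    refine ⟨?_, ?_⟩
    · rw [← sub_eq_add_neg]; exact hx.2
    · rw [sub_neg_eq_add]; exact hx.1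
  have hKpos : volume K ≠ 0 := by
    intro h0
    rw [h0, mul_zero] at hc
    exact hLpos (le_antisymm hc bot_le)
  obtain ⟨x, r, hr, hb⟩ := convex_exists_ball volume hKconv hKpos
  have hb0 : Metric.ball 0 r ⊆ K := by
    intro v hv
    rw [mem_ball_zero_iff] at hv
    have h1 : x + v ∈ K := hb (by rw [Metric.mem_ball, dist_eq_norm]; simpa using hv)
    have h2 : -(x - v) ∈ K := hKsymm _ (hb (by rw [Metric.mem_ball, dist_eq_norm]; simpa using hv))
    have := hKconv h1 h2 (by norm_num : (0 : ℝ) ≤ 2⁻¹) (by norm_num : (0 : ℝ) ≤ 2⁻¹) (by norm_num)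
    have e : (2 : ℝ)⁻¹ • (x + v) + (2 : ℝ)⁻¹ • -(x - v) = v := by module
    rwa [e] at this
  obtain ⟨u, a, ha, hbox, hvol⟩ := john_box (by omega) hKc hKconv hKsymm hr hb0
  refine ⟨u, a, c, ha, fun q hq => (hbox q hq).1, hlv.trans ?_⟩
  have hprod : 0 ≤ ∏ i, (2 * a i) := Finset.prod_nonneg fun i _ => by have := ha i; positivity
  gcongr
  have h2 : volume L ≤ ENNReal.ofReal (Real.sqrt (2 * Real.pi * Real.exp 1 * n) ^ n * ∏ i, (2 * a i)) := by
    refine hc.trans ((mul_le_mul_right hvol _).trans (le_of_eq ?_))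
    rw [← ENNReal.ofReal_mul (by positivity)]
    congr 1
    rw [div_pow]
    field_simp
  exact ENNReal.toReal_le_of_le_ofReal (by positivity) h2

/-- coordinates -/
def Phi (u : OrthonormalBasis (Fin n) ℝ (Eucl n)) (x : Fin n → ℝ) : Eucl n := ∑ i, x i • u i

/-- the function in coordinates -/
def gg (u : OrthonormalBasis (Fin n) ℝ (Eucl n)) (f : Eucl n → ℝ) (x : Fin n → ℝ) : ℝ≥0∞ :=
  ENNReal.ofReal (f (Phi u x))

lemma Phi_add (u : OrthonormalBasis (Fin n) ℝ (Eucl n)) (x y : Fin n → ℝ) :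
    Phi u (x + y) = Phi u x + Phi u y := by
  simp [Phi, add_smul, Finset.sum_add_distrib]

lemma Phi_smul (u : OrthonormalBasis (Fin n) ℝ (Eucl n)) (t : ℝ) (y : Fin n → ℝ) :
    Phi u (t • y) = t • Phi u y := by
  simp [Phi, mul_smul, Finset.smul_sum]

lemma Phi_surj (u : OrthonormalBasis (Fin n) ℝ (Eucl n)) (v : Eucl n) : Phi u (fun i => inner ℝ (u i) v) = v :=
  u.sum_repr' v

lemma obasis_mp {κ : Type*} [Fintype κ] {V : Type*} [NormedAddCommGroup V] [InnerProductSpace ℝ V]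
    [FiniteDimensional ℝ V] [MeasurableSpace V] [BorelSpace V]
    (u : OrthonormalBasis κ ℝ V) : 
    (∀ F : V → ℝ≥0∞, ∫⁻ v, F v = ∫⁻ x : κ → ℝ, F (∑ i, x i • u i)) ∧
    (∀ F : V → ℝ, ∫ v, F v = ∫ x : κ → ℝ, F (∑ i, x i • u i)) := by
  let e : (κ → ℝ) ≃ᵐ V := (MeasurableEquiv.toLp 2 (κ → ℝ)).trans u.repr.symm.toHomeomorph.toMeasurableEquiv
  have hmp : MeasurePreserving e volume volume :=
    u.measurePreserving_repr_symm.comp (PiLp.volume_preserving_toLp κ)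
  have he : ∀ x, e x = ∑ i, x i • u i := by
    intro x
    show u.repr.symm (WithLp.toLp 2 x) = _
    rw [← u.sum_repr_symm]
  refine ⟨fun F => ?_, fun F => ?_⟩
  · rw [← hmp.lintegral_comp_emb e.measurableEmbedding]
    simp_rw [he]
  · rw [← hmp.integral_comp e.measurableEmbedding]
    simp_rw [he]

lemma lintegral_gg {f : Eucl n → ℝ} (h : MemQ0 f) (u : OrthonormalBasis (Fin n) ℝ (Eucl n)) :
    ∫⁻ x, gg u f x = ENNReal.ofReal (∫ x, f x) := by
  rw [ofReal_integral_eq_lintegral_ofReal h.2.2.2.1 (Filter.Eventually.of_forall h.1), (obasis_mp u).1]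
  rfl

lemma MemQ0.scale {f : Eucl n → ℝ} (h : MemQ0 f) {x0 : Eucl n} (hpos : 0 < f x0)
    (hmax : ∀ x, f x ≤ f x0) (u : OrthonormalBasis (Fin n) ℝ (Eucl n)) (a c : Fin n → ℝ) (lam : ℝ) (hlam : 0 ≤ lam)
    (hbox : ∀ q : Fin n → ℝ, (∀ i, |q i| ≤ a i) → Real.exp (-lam) * f x0 ≤ f (Phi u c + Phi u q)) :
    ScaleProp c a lam (gg u f) := by
  intro t ht q hq x
  unfold gg
  rw [← ENNReal.ofReal_mul (by positivity)]
  apply ENNReal.ofReal_le_ofReal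
  set z := Phi u (x + q) with hz
  set w := Phi u c + Phi u (-(t⁻¹ • q)) with hw
  have hwf : Real.exp (-lam) * f x0 ≤ f w := by
    apply hbox
    intro i
    simp only [Pi.neg_apply, Pi.smul_apply, smul_eq_mul, abs_neg, abs_mul, abs_inv, abs_of_pos ht]
    rw [inv_mul_le_iff₀ ht]
    exact hq i
  set s : ℝ := (1 + t)⁻¹ with hs
  have hs0 : 0 < s := by positivity
  have hs1 : s < 1 := inv_lt_one_of_one_lt₀ (by linarith)
  have hst : 1 - s = s * t := by rw [hs]; field_simp; ring
  have e : s • z + (1 - s) • w = Phi u (s • (x + t • c)) := by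
    rw [hst, hz, hw, ← Phi_add, ← Phi_smul, ← Phi_smul, ← Phi_add]
    congr 1
    ext i
    simp only [Pi.add_apply, Pi.smul_apply, Pi.neg_apply, smul_eq_mul]
    field_simp
    ring
  have hlc := h.2.1 z w s hs0 hs1
  rw [e] at hlc
  have h2 : f z * Real.exp (-lam * (1 - s)) ≤ f z ^ s * f w ^ (1 - s) := by
    calc f z * Real.exp (-lam * (1 - s)) = f z ^ s * (Real.exp (-lam) * f z) ^ (1 - s) := by
          rw [Real.mul_rpow (by positivity) (h.1 _), ← Real.exp_mul, mul_left_comm,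
            ← Real.rpow_add_of_nonneg (h.1 _) hs0.le (by linarith)]
          simp [mul_comm]
      _ ≤ _ := by
          have h0 := h.1 z
          have h3 : Real.exp (-lam) * f z ≤ f w := le_trans (by gcongr; exact hmax z) hwf
          have h4 : 0 ≤ 1 - s := by linarith
          gcongr
  have h5 := h2.trans hlc
  have h6 : f z ≤ Real.exp (lam * (1 - s)) * f (Phi u (s • (x + t • c))) := by
    calc f z = Real.exp (lam * (1 - s)) * (f z * Real.exp (-lam * (1 - s))) := by
          rw [mul_left_comm, ← Real.exp_add]; simp
      _ ≤ _ := by gcongr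
  refine h6.trans ?_
  have h7 := h.1 (Phi u (s • (x + t • c)))
  gcongr
  rw [hst]
  nlinarith

lemma supOff_base (S : Finset (Fin n)) (g : (Fin n → ℝ) → ℝ≥0∞) (c c' : Fin n → ℝ) (y : S → ℝ) :
    supOff S g (Function.updateFinset c S y) = supOff S g (Function.updateFinset c' S y) := by
  unfold supOff
  refine iSup_congr fun z => ?_
  congr 1
  ext i
  by_cases hi : i ∈ S <;> simp [Function.updateFinset, hi]

lemma JJ_base (S : Finset (Fin n)) (g : (Fin n → ℝ) → ℝ≥0∞) (c c' : Fin n → ℝ) : JJ S g c = JJ S g c' := by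
  unfold JJ lmarginal
  exact lintegral_congr fun y => supOff_base S g c c' y

lemma MemQ0.JJ_lt_top {f : Eucl n → ℝ} (h : MemQ0 f) (u : OrthonormalBasis (Fin n) ℝ (Eucl n)) (S : Finset (Fin n)) :
    JJ S (gg u f) 0 ≠ ∞ := by
  obtain ⟨x0, hpos, hmax⟩ := h.exists_max
  obtain ⟨t, x, r, ht, hr, hb⟩ := h.ball
  have htM : t ≤ f x0 := le_trans (hb (Metric.mem_ball_self hr)) (hmax x)
  set lam := Real.log (f x0 / t) with hlam
  have hlam0 : 0 ≤ lam := Real.log_nonneg (by rwa [one_le_div ht])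
  have hexp : Real.exp (-lam) * f x0 = t := by
    rw [Real.exp_neg, hlam, Real.exp_log (by positivity)]; field_simp
  set c : Fin n → ℝ := fun i => inner ℝ (u i) x with hc
  have hsc : ScaleProp c (fun _ => r / (n + 1)) lam (gg u f) := by
    refine h.scale hpos hmax u _ c lam hlam0 fun q hq => ?_
    rw [hexp]
    apply hb
    rw [hc, Phi_surj, Metric.mem_ball, dist_eq_norm, add_sub_cancel_left]
    calc ‖Phi u q‖ ≤ ∑ i, ‖q i • u i‖ := norm_sum_le _ _
      _ ≤ ∑ i : Fin n, r / (n + 1) := by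
          refine Finset.sum_le_sum fun i _ => ?_
          rw [norm_smul, u.norm_eq_one, mul_one]
          exact hq i
      _ = n * (r / (n + 1)) := by simp
      _ < r := by
          rw [mul_div_assoc', div_lt_iff₀ (by positivity)]
          nlinarith
  have hcard : S.card ≤ n := by simpa using Finset.card_le_univ S
  have hV := VV_bound' S.card (n - S.card) (by simp; omega) c (fun _ => r / (n + 1)) lam hlam0 (fun _ => by positivity) hsc
  rw [lintegral_gg h] at hV
  rw [JJ_base S _ 0 c]
  intro htop
  have h1 : VV S.card (fun _ : Fin n => r / (n + 1)) (gg u f) c = ∞ := by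
    unfold VV
    rw [ENNReal.sum_eq_top]
    refine ⟨S, by simp [Finset.mem_powersetCard], ?_⟩
    rw [htop, ENNReal.mul_top]
    rw [Finset.prod_ne_zero_iff]
    intro i _
    simp only [ne_eq, ENNReal.ofReal_eq_zero, not_le]
    positivity
  rw [h1, ENNReal.mul_top (by exact_mod_cast Nat.factorial_ne_zero _)] at hV
  exact absurd hV (not_le.2 (ENNReal.mul_lt_top (ENNReal.pow_lt_top ENNReal.ofReal_lt_top) ENNReal.ofReal_lt_top))

lemma MemQ0.aem {f : Eucl n → ℝ} (h : MemQ0 f) (u : OrthonormalBasis (Fin n) ℝ (Eucl n)) (S : Finset (Fin n))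
    (c : Fin n → ℝ) :
    AEMeasurable (fun y : S → ℝ => supOff S (gg u f) (Function.updateFinset c S y)) volume := by
  have hcv : ∀ t : ℝ≥0∞, Convex ℝ {y : S → ℝ | t < supOff S (gg u f) (Function.updateFinset c S y)} := by
    intro t y hy y' hy' a b ha hb hab
    simp only [Set.mem_ofPred_eq, supOff, lt_iSup_iff] at hy hy' ⊢
    obtain ⟨z, hz⟩ := hy
    obtain ⟨z', hz'⟩ := hy'
    refine ⟨a • z + b • z', ?_⟩
    set X : Fin n → ℝ := fun i => if i ∈ S then Function.updateFinset c S y i else z i with hX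
    set X' : Fin n → ℝ := fun i => if i ∈ S then Function.updateFinset c S y' i else z' i with hX'
    have e : (fun i => if i ∈ S then Function.updateFinset c S (a • y + b • y') i else (a • z + b • z') i) = a • X + b • X' := by
      ext i
      by_cases hi : i ∈ S <;> simp [Function.updateFinset, hi, hX, hX']
    rw [e]
    have hq := h.2.1.quasi h.1 (t := min (f (Phi u X)) (f (Phi u X'))) (le_min (h.1 _) (h.1 _))
    have m1 : Phi u X ∈ {x | min (f (Phi u X)) (f (Phi u X')) ≤ f x} :=
      show _ ≤ f (Phi u X) from min_le_left _ _
    have m2 : Phi u X' ∈ {x | min (f (Phi u X)) (f (Phi u X')) ≤ f x} :=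
      show _ ≤ f (Phi u X') from min_le_right _ _
    have := hq m1 m2 ha hb hab
    rw [← Phi_smul, ← Phi_smul, ← Phi_add] at this
    refine lt_of_lt_of_le (lt_min hz hz') ?_
    unfold gg
    rw [← ENNReal.ofReal_min]
    exact ENNReal.ofReal_le_ofReal this
  have hnm : NullMeasurable (fun y : S → ℝ => supOff S (gg u f) (Function.updateFinset c S y)) volume := by
    have : @Measurable (NullMeasurableSpace (S → ℝ) volume) ℝ≥0∞ _ _ (fun y : S → ℝ => supOff S (gg u f) (Function.updateFinset c S y)) := by
      apply measurable_of_Ioi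
      intro t
      exact (hcv t).nullMeasurableSet volume
    exact this
  exact hnm.aemeasurable

open Classical in
/-- coordinate subspace -/
def HS (u : OrthonormalBasis (Fin n) ℝ (Eucl n)) (S : Finset (Fin n)) : Submodule ℝ (Eucl n) :=
  Submodule.span ℝ (S.image u : Set (Eucl n))

open Classical in
lemma HS_finrank (u : OrthonormalBasis (Fin n) ℝ (Eucl n)) (S : Finset (Fin n)) :
    Module.finrank ℝ (HS u S) = S.card := by
  have := Module.finrank_eq_card_basis (OrthonormalBasis.span u.orthonormal S).toBasis
  rw [Fintype.card_coe] at this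
  exact this

lemma projL1_eq {f : Eucl n → ℝ} (h : MemQ0 f) (u : OrthonormalBasis (Fin n) ℝ (Eucl n)) (S : Finset (Fin n)) :
    projL1 f (HS u S) = (JJ S (gg u f) 0).toReal := by
  classical
  obtain ⟨x0, hpos, hmax⟩ := h.exists_max
  have hJ : JJ S (gg u f) 0 = ∫⁻ y : S → ℝ, supOff S (gg u f) (Function.updateFinset 0 S y) := rfl
  unfold projL1
  rw [hJ, ← integral_toReal (h.aem u S 0)]
  swap
  · refine Filter.Eventually.of_forall fun y => lt_of_le_of_lt (iSup_le fun z => ?_) (ENNReal.ofReal_lt_top (r := f x0))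
    exact ENNReal.ofReal_le_ofReal (hmax _)
  let bS : OrthonormalBasis S ℝ (HS u S) := OrthonormalBasis.span u.orthonormal S
  have hbS : ∀ i : S, (bS i : Eucl n) = u i := fun i => OrthonormalBasis.span_apply u.orthonormal S i
  rw [(obasis_mp bS).2]
  refine integral_congr_ae (Filter.Eventually.of_forall fun y => ?_)
  have e1 : ∀ v : Eucl n, f v = (ENNReal.ofReal (f v)).toReal := fun v => (ENNReal.toReal_ofReal (h.1 v)).symm
  simp only
  rw [show (⨆ z : (HS u S)ᗮ, f (((∑ i, y i • bS i : HS u S) : Eucl n) + (z : Eucl n))) =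
    ⨆ z : (HS u S)ᗮ, (ENNReal.ofReal (f (((∑ i, y i • bS i : HS u S) : Eucl n) + (z : Eucl n)))).toReal from iSup_congr fun z => e1 _]
  rw [← ENNReal.toReal_iSup (fun _ => ENNReal.ofReal_ne_top)]
  congr 1
  have hsum : ((∑ i, y i • bS i : HS u S) : Eucl n) = ∑ i ∈ S, (Function.updateFinset (0 : Fin n → ℝ) S y i) • u i := by
    rw [Submodule.coe_sum, ← Finset.sum_coe_sort S]
    refine Finset.sum_congr rfl fun i _ => ?_
    rw [Submodule.coe_smul, hbS]
    simp [Function.updateFinset]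
  have hPhi : ∀ z : Fin n → ℝ, Phi u (fun i => if i ∈ S then Function.updateFinset (0 : Fin n → ℝ) S y i else z i) =
      ((∑ i, y i • bS i : HS u S) : Eucl n) + ∑ i ∈ Sᶜ, z i • u i := by
    intro z
    rw [hsum, Phi, ← Finset.sum_add_sum_compl S]
    congr 1
    · refine Finset.sum_congr rfl fun i hi => by simp [hi]
    · refine Finset.sum_congr rfl fun i hi => by simp [Finset.mem_compl.1 hi]
  have hmem : ∀ i ∈ S, u i ∈ HS u S := fun i hi => Submodule.subset_span (by simp; exact ⟨i, hi, rfl⟩)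
  apply le_antisymm
  · refine iSup_le fun z => ?_
    refine le_trans (le_of_eq ?_) (le_iSup _ (fun i => inner ℝ (u i) (z : Eucl n)))
    unfold gg
    rw [hPhi]
    congr 3
    conv_lhs => rw [← Phi_surj u (z : Eucl n), Phi, ← Finset.sum_add_sum_compl S]
    rw [Finset.sum_eq_zero, zero_add]
    intro i hi
    have : inner ℝ (u i) (z : Eucl n) = 0 := (Submodule.mem_orthogonal _ _).1 z.2 _ (hmem i hi)
    rw [this, zero_smul]
  · refine iSup_le fun z => ?_
    have hz : ∑ i ∈ Sᶜ, z i • u i ∈ (HS u S)ᗮ := by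
      refine Submodule.sum_mem _ fun i hi => Submodule.smul_mem _ _ ?_
      rw [Submodule.mem_orthogonal]
      intro v hv
      refine Submodule.span_induction ?_ ?_ ?_ ?_ hv
      · intro x hx
        simp only [Finset.coe_image, Set.mem_image, Finset.mem_coe] at hx
        obtain ⟨j, hj, rfl⟩ := hx
        have : j ≠ i := by rintro rfl; exact Finset.mem_compl.1 hi hj
        exact u.orthonormal.2 this
      · simp
      · intro x y _ _ hx hy; rw [inner_add_left, hx, hy, add_zero]
      · intro a x _ hx; rw [inner_smul_left, hx, mul_zero]
    refine le_trans (le_of_eq ?_) (le_iSup _ ⟨_, hz⟩)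
    unfold gg
    rw [hPhi]

lemma JJ_le {f₁ f₂ : Eucl n → ℝ} (h₁ : MemQ0 f₁) (h₂ : MemQ0 f₂) (u : OrthonormalBasis (Fin n) ℝ (Eucl n)) {k : ℕ}
    (hcond : ∀ H : Submodule ℝ (Eucl n), Module.finrank ℝ H = k → projL1 f₁ H ≤ projL1 f₂ H)
    (S : Finset (Fin n)) (hS : S.card = k) : JJ S (gg u f₁) 0 ≤ JJ S (gg u f₂) 0 := by
  have := hcond (HS u S) (by rw [HS_finrank, hS])
  rw [projL1_eq h₁, projL1_eq h₂] at this
  exact (ENNReal.toReal_le_toReal (h₁.JJ_lt_top u S) (h₂.JJ_lt_top u S)).1 this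

end coords

end part6

section part7

open scoped ENNReal
set_option linter.unusedSectionVars false
set_option linter.unusedVariables false

section final
variable {n : ℕ}

lemma fact_bound (k m : ℕ) (hk : 1 ≤ k) :
    ((k + m : ℕ) : ℝ) ^ (k + m) * k.factorial ≤ Real.exp 1 ^ m * ((k : ℝ) ^ k * (k + m).factorial) := by
  induction m with
  | zero => simp
  | succ m ih =>
    set N := k + m with hN
    have hN1 : 1 ≤ N := by omega
    have hNpos : (0 : ℝ) < N := by exact_mod_cast hN1
    have h1 : (((N + 1 : ℕ) : ℝ)) ^ N ≤ Real.exp 1 * (N : ℝ) ^ N := by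
      have h2 : ((N + 1 : ℕ) : ℝ) ≤ Real.exp (1 / N) * N := by
        have := Real.add_one_le_exp (1 / (N : ℝ))
        calc ((N + 1 : ℕ) : ℝ) = (1 / (N : ℝ) + 1) * N := by push_cast; field_simp; ring
          _ ≤ _ := by gcongr
      calc (((N + 1 : ℕ) : ℝ)) ^ N ≤ (Real.exp (1 / N) * N) ^ N := by gcongr
        _ = _ := by
          rw [mul_pow, ← Real.exp_nat_mul]
          congr 2
          field_simp
    rw [show k + (m + 1) = N + 1 by omega, Nat.factorial_succ, pow_succ (((N + 1 : ℕ) : ℝ)), pow_succ (Real.exp 1)]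
    calc ((N + 1 : ℕ) : ℝ) ^ N * ((N + 1 : ℕ) : ℝ) * k.factorial 
        ≤ (Real.exp 1 * (N : ℝ) ^ N) * ((N + 1 : ℕ) : ℝ) * k.factorial := by gcongr
      _ = Real.exp 1 * ((N + 1 : ℕ) : ℝ) * ((N : ℝ) ^ N * k.factorial) := by ring
      _ ≤ Real.exp 1 * ((N + 1 : ℕ) : ℝ) * (Real.exp 1 ^ m * ((k : ℝ) ^ k * N.factorial)) := by gcongr
      _ = _ := by push_cast; ring

lemma num_bound : (1 + Real.log 4) * Real.sqrt (5 / 3) * Real.sqrt (2 * Real.pi * Real.exp 1) ≤ 16 := by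
  have h4 : Real.log 4 ≤ 1.4 := by
    have : Real.log 4 = 2 * Real.log 2 := by
      rw [show (4 : ℝ) = 2 ^ 2 by norm_num, Real.log_pow]; norm_num
    have := Real.log_two_lt_d9
    linarith
  have hs : Real.sqrt (5 / 3) ≤ 1.3 := by
    rw [Real.sqrt_le_left (by norm_num)]; norm_num
  have hp : Real.sqrt (2 * Real.pi * Real.exp 1) ≤ 4.2 := by
    rw [Real.sqrt_le_left (by norm_num)]
    have h1 := Real.pi_lt_d2
    have h2 := Real.exp_one_lt_d9
    have h3 := Real.pi_pos
    have h4 := Real.exp_pos 1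
    nlinarith
  calc _ ≤ ((1 : ℝ) + 1.4) * 1.3 * 4.2 := by gcongr
    _ ≤ 16 := by norm_num

lemma const_bound (k m : ℕ) (hk : 1 ≤ k) (hm : 1 ≤ m) :
    (((k + m : ℕ) : ℝ) / k) ^ k * (((k + m : ℕ) : ℝ) + ((k + m : ℕ) : ℝ) * Real.log 4) ^ m *
      ((5 / 3 : ℝ) ^ ((m : ℝ) / (k + m : ℕ)) * Real.sqrt (2 * Real.pi * Real.exp 1 * (k + m : ℕ)) ^ m) ≤
    (16 * Real.exp 1 * Real.sqrt (k + m : ℕ)) ^ m * (m.factorial * (k + m).choose k) := by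
  have hf := fact_bound k m hk
  have hch : ((m.factorial : ℝ) * (k + m).choose k) * k.factorial = (k + m).factorial := by
    have := Nat.choose_mul_factorial_mul_factorial (show k ≤ k + m by omega)
    rw [Nat.add_sub_cancel_left] at this
    rw [← this]; push_cast; ring
  set N : ℝ := ((k + m : ℕ) : ℝ) with hN
  have hkp : (0 : ℝ) < k := by exact_mod_cast hk
  have hN2 : 2 ≤ N := by rw [hN]; exact_mod_cast (by omega : 2 ≤ k + m)
  have h53 : (5 / 3 : ℝ) ^ ((m : ℝ) / N) ≤ Real.sqrt (5 / 3) ^ m := by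
    rw [Real.sqrt_eq_rpow, ← Real.rpow_natCast, ← Real.rpow_mul (by norm_num)]
    apply Real.rpow_le_rpow_of_exponent_le (by norm_num)
    rw [div_le_iff₀ (by linarith)]
    have : (0 : ℝ) ≤ m := by positivity
    nlinarith
  have hlog : 0 ≤ Real.log 4 := Real.log_nonneg (by norm_num)
  have hfac : (0 : ℝ) < k.factorial := by exact_mod_cast Nat.factorial_pos k
  have hA : (N / k) ^ k * N ^ m ≤ Real.exp 1 ^ m * (m.factorial * (k + m).choose k) := by
    rw [← mul_le_mul_iff_left₀ hfac, mul_assoc (Real.exp 1 ^ m), hch, div_pow]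
    rw [pow_add] at hf
    rw [show N ^ k / (k : ℝ) ^ k * N ^ m * k.factorial = (N ^ k * N ^ m * k.factorial) / (k : ℝ) ^ k by ring,
      div_le_iff₀ (by positivity)]
    linarith
  rw [Real.sqrt_mul (by positivity)]
  calc (N / k) ^ k * (N + N * Real.log 4) ^ m * ((5 / 3 : ℝ) ^ ((m : ℝ) / N) * (Real.sqrt (2 * Real.pi * Real.exp 1) * Real.sqrt N) ^ m)
      ≤ (N / k) ^ k * (N + N * Real.log 4) ^ m * (Real.sqrt (5 / 3) ^ m * (Real.sqrt (2 * Real.pi * Real.exp 1) * Real.sqrt N) ^ m) := by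
        gcongr
    _ = ((N / k) ^ k * N ^ m) * (((1 + Real.log 4) * Real.sqrt (5 / 3) * Real.sqrt (2 * Real.pi * Real.exp 1)) ^ m * Real.sqrt N ^ m) := by
        rw [show N + N * Real.log 4 = N * (1 + Real.log 4) by ring]
        simp only [mul_pow]; ring
    _ ≤ (Real.exp 1 ^ m * (m.factorial * (k + m).choose k)) * (16 ^ m * Real.sqrt N ^ m) := by
        have := num_bound
        gcongr
    _ = _ := by simp only [mul_pow]; ring

lemma prod_compl (k : ℕ) (b : Fin n → ℝ) :
    ∏ S ∈ Finset.powersetCard k (Finset.univ : Finset (Fin n)), ∏ i ∈ Sᶜ, b i =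
      (∏ i, b i) ^ ((n - 1).choose k) := by
  rw [Finset.prod_comm' (t' := Finset.univ) (s' := fun i => Finset.powersetCard k (Finset.univ.erase i))]
  · rw [← Finset.prod_pow]
    refine Finset.prod_congr rfl fun i _ => ?_
    rw [Finset.prod_const, Finset.card_powersetCard, Finset.card_erase_of_mem (Finset.mem_univ _)]
    simp
  · intro S i
    simp only [Finset.mem_powersetCard, Finset.mem_compl, Finset.mem_univ, and_true, Finset.subset_univ, true_and]
    constructor
    · rintro ⟨h1, h2⟩
      exact ⟨fun j hj => Finset.mem_erase.2 ⟨fun e => h2 (e ▸ hj), Finset.mem_univ _⟩, h1⟩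
    · rintro ⟨h1, h2⟩
      exact ⟨h2, fun hi => (Finset.mem_erase.1 (h1 hi)).1 rfl⟩

lemma pow_int {f : Eucl n → ℝ} (h : MemQ0 f) {x1 : Eucl n} (hpos : 0 < f x1)
    (u : OrthonormalBasis (Fin n) ℝ (Eucl n)) (p : ℝ) (hp : 1 < p) :
    ENNReal.ofReal (f x1 ^ (p - 1)) * ∫⁻ x, gg u f x ≤ ENNReal.ofReal (p ^ n) * ∫⁻ x, gg u f x ^ p := by
  have hp0 : 0 < p := by linarith
  set c : Fin n → ℝ := fun i => inner ℝ (u i) x1 with hc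
  have hPc : Phi u c = x1 := Phi_surj u x1
  have hscale := lintegral_smul_scale (volume : Measure (Fin n → ℝ)) p hp0 (fun x => gg u f x ^ p)
  rw [Module.finrank_fin_fun] at hscale
  have htr := lintegral_add_right_eq_self (μ := (volume : Measure (Fin n → ℝ)))
    (fun y => gg u f (p⁻¹ • y) ^ p) ((p - 1) • c)
  rw [← hscale, ← htr, ← lintegral_const_mul' _ _ ENNReal.ofReal_ne_top]
  refine lintegral_mono fun x => ?_
  have hlc := h.2.1 (Phi u x) x1 p⁻¹ (by positivity) (inv_lt_one_of_one_lt₀ hp)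
  have e : p⁻¹ • Phi u x + (1 - p⁻¹) • x1 = Phi u (p⁻¹ • (x + (p - 1) • c)) := by
    rw [Phi_smul, Phi_add, Phi_smul, hPc, smul_add, smul_smul]
    congr 2
    field_simp
  rw [e] at hlc
  unfold gg
  rw [ENNReal.ofReal_rpow_of_nonneg (h.1 _) hp0.le, ← ENNReal.ofReal_mul (by positivity)]
  apply ENNReal.ofReal_le_ofReal
  have h0 := h.1 (Phi u x)
  have := Real.rpow_le_rpow (by positivity) hlc hp0.le
  refine le_trans (le_of_eq ?_) this
  rw [Real.mul_rpow (by positivity) (by positivity), ← Real.rpow_mul h0, ← Real.rpow_mul hpos.le, inv_mul_cancel₀ hp0.ne',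
    Real.rpow_one, mul_comm, sub_mul, inv_mul_cancel₀ hp0.ne', one_mul]


/-- the `f₁` side -/
lemma f1_side {f : Eucl n → ℝ} (h : MemQ0 f) {x1 : Eucl n} (hpos : 0 < f x1)
    (u : OrthonormalBasis (Fin n) ℝ (Eucl n)) (k : ℕ) (hk : 1 ≤ k) (hkn : k < n) :
    (∫ x, f x) ^ ((k : ℝ) / n) * f x1 ^ (((n : ℝ) - k) / n) ≤
      ((n : ℝ) / k) ^ k * (∏ S ∈ Finset.powersetCard k (Finset.univ : Finset (Fin n)),
        (JJ S (gg u f) 0).toReal) ^ (((n.choose k : ℕ) : ℝ)⁻¹) := by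
  have hkp : (0 : ℝ) < k := by exact_mod_cast hk
  have hnp : (0 : ℝ) < n := by exact_mod_cast (by omega : 0 < n)
  have hknr : (k : ℝ) < n := by exact_mod_cast hkn
  set p : ℝ := (n : ℝ) / k with hp
  have hp1 : 1 < p := by rw [hp, one_lt_div hkp]; exact hknr
  have hp0 : 0 < p := by linarith
  have hI := h.2.2.2.2
  have h1 := pow_int h hpos u p hp1
  have h2 := loomis k hk (by simpa using hkn.le) (gg u f) (fun S => h.aem u S 0)
  rw [Fintype.card_fin] at h2
  rw [lintegral_gg h, ← ENNReal.ofReal_mul (by positivity)] at h1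
  set C : ℕ := (n - 1).choose (k - 1) with hC
  have hCpos : 0 < C := Nat.choose_pos (by omega)
  have hCr : (0 : ℝ) < C := by exact_mod_cast hCpos
  set P := ∏ S ∈ Finset.powersetCard k (Finset.univ : Finset (Fin n)), (JJ S (gg u f) 0).toReal with hP
  have hP0 : 0 ≤ P := Finset.prod_nonneg fun _ _ => ENNReal.toReal_nonneg
  have h3 : ∏ S ∈ Finset.powersetCard k (Finset.univ : Finset (Fin n)), JJ S (gg u f) 0 ^ ((C : ℝ)⁻¹)
      = ENNReal.ofReal (P ^ ((C : ℝ)⁻¹)) := by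
    rw [ENNReal.prod_rpow_of_nonneg (by positivity), ← ENNReal.ofReal_rpow_of_nonneg hP0 (by positivity)]
    congr 1
    rw [hP, ENNReal.ofReal_prod_of_nonneg (fun _ _ => ENNReal.toReal_nonneg)]
    exact Finset.prod_congr rfl fun S _ => (ENNReal.ofReal_toReal (h.JJ_lt_top u S)).symm
  rw [h3] at h2
  have h4 := h1.trans (mul_le_mul_right h2 _)
  rw [← ENNReal.ofReal_mul (by positivity), ENNReal.ofReal_le_ofReal_iff (by positivity)] at h4
  have h5 := Real.rpow_le_rpow (by positivity) h4 (show (0 : ℝ) ≤ k / n by positivity)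
  have hcc : (n : ℝ) * C = (n.choose k : ℕ) * k := by
    have := Nat.add_one_mul_choose_eq (n - 1) (k - 1)
    rw [Nat.sub_add_cancel (by omega), Nat.sub_add_cancel hk] at this
    rw [hC]; exact_mod_cast this
  have hchp : (0 : ℝ) < (n.choose k : ℕ) := by exact_mod_cast Nat.choose_pos hkn.le
  rw [Real.mul_rpow (by positivity) hI.le, Real.mul_rpow (by positivity) (by positivity),
    ← Real.rpow_mul hpos.le, ← Real.rpow_mul hP0, ← Real.rpow_natCast, ← Real.rpow_mul hp0.le] at h5
  have e1 : (p - 1) * ((k : ℝ) / n) = ((n : ℝ) - k) / n := by rw [hp]; field_simp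
  have e2 : (C : ℝ)⁻¹ * ((k : ℝ) / n) = (((n.choose k : ℕ) : ℝ)⁻¹) := by
    field_simp; linarith
  have e3 : (n : ℝ) * ((k : ℝ) / n) = k := by field_simp
  rw [e1, e2, e3, Real.rpow_natCast, mul_comm] at h5
  exact h5

lemma amgm (k m : ℕ) (hkm : k + m = n) (hn : 0 < n) (b : Fin n → ℝ) (hb : ∀ i, 0 < b i) (j : Finset (Fin n) → ℝ)
    (hj : ∀ S, 0 ≤ j S) :
    ((n.choose k : ℕ) : ℝ) * ((∏ i, b i) ^ ((m : ℝ) / n) *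
      (∏ S ∈ Finset.powersetCard k (Finset.univ : Finset (Fin n)), j S) ^ (((n.choose k : ℕ) : ℝ)⁻¹)) ≤
    ∑ S ∈ Finset.powersetCard k (Finset.univ : Finset (Fin n)), (∏ i ∈ Sᶜ, b i) * j S := by
  have hchp : (0 : ℝ) < (n.choose k : ℕ) := by exact_mod_cast Nat.choose_pos (by omega)
  have hnp : (0 : ℝ) < n := by exact_mod_cast hn
  have hB : 0 < ∏ i, b i := Finset.prod_pos fun i _ => hb i
  have hz : ∀ S ∈ Finset.powersetCard k (Finset.univ : Finset (Fin n)), 0 ≤ (∏ i ∈ Sᶜ, b i) * j S :=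
    fun S _ => mul_nonneg (Finset.prod_nonneg fun i _ => (hb i).le) (hj S)
  have h := Real.geom_mean_le_arith_mean_weighted (Finset.powersetCard k (Finset.univ : Finset (Fin n)))
    (fun _ => ((n.choose k : ℕ) : ℝ)⁻¹) (fun S => (∏ i ∈ Sᶜ, b i) * j S) (fun _ _ => by positivity)
    (by rw [Finset.sum_const, Finset.card_powersetCard]; simp; field_simp) hz
  rw [Real.finsetProd_rpow _ _ hz, ← Finset.mul_sum, Finset.prod_mul_distrib, prod_compl,
    Real.mul_rpow (by positivity) (Finset.prod_nonneg fun S _ => hj S), ← Real.rpow_natCast, ← Real.rpow_mul hB.le] at h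
  have e : (((n - 1).choose k : ℕ) : ℝ) * ((n.choose k : ℕ) : ℝ)⁻¹ = (m : ℝ) / n := by
    have h1 := Nat.choose_mul_succ_eq (n - 1) k
    rw [show n - 1 + 1 = n by omega, show n - k = m by omega] at h1
    have h2 : (((n - 1).choose k : ℕ) : ℝ) * n = (n.choose k : ℕ) * m := by exact_mod_cast h1
    field_simp
    linarith
  rw [e] at h
  rwa [← div_eq_inv_mul, le_div_iff₀ hchp, mul_comm] at h

lemma f2_side {f₁ f₂ : Eucl n → ℝ} (h₁ : MemQ0 f₁) (h₂ : MemQ0 f₂) (u : OrthonormalBasis (Fin n) ℝ (Eucl n)) {k m : ℕ}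
    (hkm : k + m = n)
    (hcond : ∀ H : Submodule ℝ (Eucl n), Module.finrank ℝ H = k → projL1 f₁ H ≤ projL1 f₂ H)
    (a : Fin n → ℝ) (ha : ∀ i, 0 < a i) (c : Fin n → ℝ) (lam : ℝ) (hlam : 0 ≤ lam)
    (hsc : ScaleProp c a lam (gg u f₂)) :
    (m.factorial : ℝ) * ∑ S ∈ Finset.powersetCard k (Finset.univ : Finset (Fin n)),
      (∏ i ∈ Sᶜ, (2 * a i)) * (JJ S (gg u f₁) 0).toReal ≤ ((n : ℝ) + lam) ^ m * ∫ x, f₂ x := by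
  have hV := VV_bound' k m (by simpa using hkm) c a lam hlam ha hsc
  rw [lintegral_gg h₂, Fintype.card_fin] at hV
  have hI := h₂.2.2.2.2
  rw [← ENNReal.ofReal_le_ofReal_iff (by positivity), ENNReal.ofReal_mul (by positivity), ENNReal.ofReal_mul (by positivity),
    ENNReal.ofReal_pow (by positivity), ENNReal.ofReal_natCast]
  refine le_trans ?_ hV
  gcongr
  unfold VV
  rw [ENNReal.ofReal_sum_of_nonneg]
  · refine Finset.sum_le_sum fun S hS => ?_
    rw [ENNReal.ofReal_mul (Finset.prod_nonneg fun i _ => by have := ha i; positivity),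
      ENNReal.ofReal_prod_of_nonneg (fun i _ => by have := ha i; positivity), ENNReal.ofReal_toReal (h₁.JJ_lt_top u S),
      JJ_base S _ c 0]
    gcongr
    exact JJ_le h₁ h₂ u hcond S (Finset.mem_powersetCard.1 hS).2
  · intro S _
    exact mul_nonneg (Finset.prod_nonneg fun i _ => by have := ha i; positivity) ENNReal.toReal_nonneg

end final

end part7

/-- **The functional Shephard problem** (Corollary 4.8, second bound). -/
theorem functional_shephard_sup_int (n k : ℕ) (hn : 2 ≤ n) (hk1 : 1 ≤ k)
    (hk2 : k ≤ n - 1)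
    (f₁ f₂ : Eucl n → ℝ) (hf₁ : MemQ0 f₁) (hf₂ : MemQ0 f₂)
    (hcond : ∀ H : Submodule ℝ (Eucl n), Module.finrank ℝ H = k →
      projL1 f₁ H ≤ projL1 f₂ H) :
    (∫ x, f₁ x) ^ ((k : ℝ) / n) * supNorm f₁ ^ (((n : ℝ) - k) / n) ≤
      (16 * Real.exp 1 * Real.sqrt n) ^ (n - k) *
        ((∫ x, f₂ x) ^ ((k : ℝ) / n) * supNorm f₂ ^ (((n : ℝ) - k) / n)) := by
  obtain ⟨m, hkm⟩ : ∃ m, k + m = n := ⟨n - k, by omega⟩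
  have hm : 1 ≤ m := by omega
  obtain ⟨x1, hpos1, hmax1⟩ := hf₁.exists_max
  obtain ⟨x2, hpos2, hmax2⟩ := hf₂.exists_max
  rw [supNorm_eq hmax1, supNorm_eq hmax2, show n - k = m by omega]
  obtain ⟨u, a, c, ha, hbox, hI2⟩ := hf₂.box hn hpos2 hmax2
  have hI1pos := hf₁.2.2.2.2
  have hI2pos := hf₂.2.2.2.2
  have hlog : 0 ≤ Real.log 4 := Real.log_nonneg (by norm_num)
  have hconst := const_bound k m hk1 hm
  rw [hkm] at hconst
  have hA := f1_side hf₁ hpos1 u k hk1 (by omega)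
  have hsc : ScaleProp (fun i => inner ℝ (u i) c) a ((n : ℝ) * Real.log 4) (gg u f₂) := by
    refine hf₂.scale hpos2 hmax2 u a _ _ (by positivity) fun q hq => ?_
    rw [Phi_surj]
    refine le_trans (le_of_eq ?_) (hbox q hq)
    rw [← mul_neg, Real.exp_nat_mul, Real.exp_neg, Real.exp_log (by norm_num)]
  have hB := f2_side hf₁ hf₂ u hkm hcond a ha _ _ (by positivity) hsc
  have hC := amgm k m hkm (by omega) (fun i => 2 * a i) (fun i => by have := ha i; positivity)
    (fun S => (JJ S (gg u f₁) 0).toReal) (fun S => ENNReal.toReal_nonneg)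
  have hprod : 0 < ∏ i, (2 * a i) := Finset.prod_pos fun i _ => by have := ha i; positivity
  have hmk : ((n : ℝ) - k) / (n : ℝ) = (m : ℝ) / (n : ℝ) := by rw [← hkm]; push_cast; ring
  rw [hmk] at hA ⊢
  have hNp : (0 : ℝ) < (n : ℝ) := by exact_mod_cast (by omega : 0 < n)
  have hadd : (k : ℝ) / (n : ℝ) + (m : ℝ) / (n : ℝ) = 1 := by
    rw [← add_div, ← Nat.cast_add, hkm, div_self hNp.ne']
  set α : ℝ := (k : ℝ) / n with hα
  set β : ℝ := (m : ℝ) / n with hβ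
  have hα0 : 0 ≤ α := by positivity
  have hβ0 : 0 ≤ β := by positivity
  set I := ∫ x, f₂ x with hIdef
  set M := f₂ x2 with hM
  set B := ∏ i, (2 * a i) with hBdef
  set G := (∏ S ∈ Finset.powersetCard k (Finset.univ : Finset (Fin n)), (JJ S (gg u f₁) 0).toReal) ^ (((n.choose k : ℕ) : ℝ)⁻¹) with hG
  set s := Real.sqrt (2 * Real.pi * Real.exp 1 * n) with hs
  have hs0 : 0 ≤ s := Real.sqrt_nonneg _
  set W : ℝ := (m.factorial : ℝ) * (n.choose k : ℕ) with hW
  have hWpos : 0 < W := by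
    have h1 : 0 < m.factorial := Nat.factorial_pos m
    have h2 : 0 < n.choose k := Nat.choose_pos (by omega)
    positivity
  set D : ℝ := ((n : ℝ) + n * Real.log 4) ^ m with hD
  have hD0 : 0 ≤ D := by positivity
  have hBβ : 0 < B ^ β := Real.rpow_pos_of_pos hprod _
  -- combine
  have h1 : W * (B ^ β * G) ≤ D * I := by
    refine le_trans ?_ hB
    rw [hW, mul_assoc]
    gcongr
  have h2 : I ^ β ≤ (5 / 3 : ℝ) ^ β * s ^ m * (M ^ β * B ^ β) := by
    have := Real.rpow_le_rpow hI2pos.le hI2 hβ0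
    refine this.trans (le_of_eq ?_)
    rw [Real.mul_rpow (by positivity) (by positivity), Real.mul_rpow (by positivity) (by positivity),
      Real.mul_rpow (by positivity) (by positivity), ← Real.rpow_natCast s n, ← Real.rpow_mul hs0,
      show (n : ℝ) * β = (m : ℕ) by rw [hβ]; field_simp, Real.rpow_natCast]
    ring
  have h3 : I = I ^ α * I ^ β := by rw [← Real.rpow_add hI2pos, hadd, Real.rpow_one]
  have hIα : 0 ≤ I ^ α := by positivity
  have h4 : W * G ≤ D * ((5 / 3 : ℝ) ^ β * s ^ m) * (I ^ α * M ^ β) := by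
    rw [← mul_le_mul_iff_left₀ hBβ]
    calc W * G * B ^ β = W * (B ^ β * G) := by ring
      _ ≤ D * I := h1
      _ = D * (I ^ α * I ^ β) := by rw [← h3]
      _ ≤ D * (I ^ α * ((5 / 3 : ℝ) ^ β * s ^ m * (M ^ β * B ^ β))) := by gcongr
      _ = _ := by ring
  refine hA.trans ?_
  rw [← mul_le_mul_iff_right₀ hWpos]
  have hMβ : 0 ≤ I ^ α * M ^ β := by positivity
  calc W * (((n : ℝ) / k) ^ k * G) = ((n : ℝ) / k) ^ k * (W * G) := by ring
    _ ≤ ((n : ℝ) / k) ^ k * (D * ((5 / 3 : ℝ) ^ β * s ^ m) * (I ^ α * M ^ β)) := by gcongr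
    _ = (((n : ℝ) / k) ^ k * D * ((5 / 3 : ℝ) ^ β * s ^ m)) * (I ^ α * M ^ β) := by ring
    _ ≤ ((16 * Real.exp 1 * Real.sqrt n) ^ m * W) * (I ^ α * M ^ β) := by gcongr
    _ = _ := by ring
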